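/- Let ζ ∈ Conc and q(x) = x²/2. Then there exists a unique functional Z : LC(ℝ) → ℝ such that: (i) Z is τ-upper semicontinuous; (ii) Z is a simple, translation invariant and dually epi-translation invariant valuation that vanishes on indicator functions of closed intervals; (iii) Z(a·q + I_{[-m,m]}) = 2m·ζ(a) for all a > 0 and m > 0. -/

import Mathlib

open MeasureTheory Filter Topology Pointwise Asymptotics

noncomputable section

variable {E : Type*} [NormedAddCommGroup E] [NormedSpace ℝ E]

/-- The effective domain of an extended-real-valued function. -/
def edom (u : E → EReal) : Set E := {x | u x < ⊤}

/-- `u` has Lipschitz constant `L` on the interior of its domain. -/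
def LipBound (u : E → EReal) (L : ℝ) : Prop :=
  ∀ x ∈ interior (edom u), ∀ y ∈ interior (edom u),
    |(u x).toReal - (u y).toReal| ≤ L * ‖x - y‖

/-- Membership in `LC`: proper, lower semicontinuous, convex, compact domain,
Lipschitz on the interior of the domain. -/
def IsLC (u : E → EReal) : Prop :=
  (∀ x y : E, ∀ t : ℝ, 0 < t → t < 1 →
      u (t • x + (1 - t) • y) ≤ (t : EReal) * u x + ((1 - t : ℝ) : EReal) * u y) ∧
  LowerSemicontinuous u ∧
  (∀ x, u x ≠ ⊥) ∧
  (∃ x, u x ≠ ⊤) ∧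
  IsCompact (edom u) ∧
  (∃ L : ℝ, 0 < L ∧ LipBound u L)

/-- τ-convergence: epi-convergence together with uniformly bounded Lipschitz constants. -/
def TauConv (uk : ℕ → E → EReal) (u : E → EReal) : Prop :=
  (∀ k, IsLC (uk k)) ∧ IsLC u ∧
  (∀ (x : E) (xk : ℕ → E), Tendsto xk atTop (𝓝 x) →
      u x ≤ liminf (fun k => uk k (xk k)) atTop) ∧
  (∀ x : E, ∃ xk : ℕ → E, Tendsto xk atTop (𝓝 x) ∧
      Tendsto (fun k => uk k (xk k)) atTop (𝓝 (u x))) ∧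
  (∃ M : ℝ, 0 < M ∧ ∀ k, LipBound (uk k) M)

/-- Valuation property on `LC`. -/
def IsVal (Z : (E → EReal) → ℝ) : Prop :=
  ∀ u v : E → EReal, IsLC u → IsLC v → IsLC (fun x => min (u x) (v x)) →
    Z (fun x => min (u x) (v x)) + Z (fun x => max (u x) (v x)) = Z u + Z v

/-- τ-upper semicontinuity. -/
def TauUSC (Z : (E → EReal) → ℝ) : Prop :=
  ∀ (uk : ℕ → E → EReal) (u : E → EReal), TauConv uk u →
    limsup (fun k => Z (uk k)) atTop ≤ Z u

/-- τ-continuity. -/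
def TauCont (Z : (E → EReal) → ℝ) : Prop :=
  ∀ (uk : ℕ → E → EReal) (u : E → EReal), TauConv uk u →
    Tendsto (fun k => Z (uk k)) atTop (𝓝 (Z u))

/-- Translation invariance. -/
def TransInv (Z : (E → EReal) → ℝ) : Prop :=
  ∀ u : E → EReal, IsLC u → ∀ y : E, Z (fun x => u (x - y)) = Z u

/-- Dual epi-translation invariance. -/
def DualTransInv (Z : (E → EReal) → ℝ) : Prop :=
  ∀ u : E → EReal, IsLC u → ∀ (l : E →ₗ[ℝ] ℝ) (c : ℝ),
    Z (fun x => u x + ((l x + c : ℝ) : EReal)) = Z u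

/-- SL_n invariance. -/
def SLInv (Z : (E → EReal) → ℝ) : Prop :=
  ∀ u : E → EReal, IsLC u → ∀ φ : E →ₗ[ℝ] E, LinearMap.det φ = 1 →
    Z (fun x => u (φ x)) = Z u

/-- The class `Conc`. -/
def IsConc (ζ : ℝ → ℝ) : Prop :=
  (∀ t ∈ Set.Ici (0 : ℝ), 0 ≤ ζ t) ∧ ConcaveOn ℝ (Set.Ici 0) ζ ∧
  Tendsto ζ (𝓝[>] 0) (𝓝 0) ∧
  Tendsto (fun t => ζ t / t) atTop (𝓝 0)

open Classical in
/-- `(∞-valued) indicator function` of a set. -/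
noncomputable def eIndicator (K : Set E) : E → EReal := fun x =>
  if x ∈ K then (0 : EReal) else ⊤

/-- Real part of an extended-real-valued function. -/
def toRealFn (u : E → EReal) : E → ℝ := fun x => (u x).toReal

open Classical in
/-- Second derivative of `u`, set to `0` where `u` is not twice differentiable. -/
noncomputable def secondDeriv (u : ℝ → EReal) : ℝ → ℝ := fun x =>
  if DifferentiableAt ℝ (toRealFn u) x ∧ DifferentiableAt ℝ (deriv (toRealFn u)) x
  then deriv (deriv (toRealFn u)) x
  else 0

/-- The properties required of `Z` in Statement 18: τ-upper semicontinuity; being a simple,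
translation and dually epi-translation invariant valuation vanishing on indicator functions of
closed intervals; and `Z(a·q + I_{[-m,m]}) = 2m·ζ(a)` for all `a, m > 0`, where `q(x) = x²/2`. -/
def GoodVal (ζ : ℝ → ℝ) (Z : (ℝ → EReal) → ℝ) : Prop :=
  TauUSC Z ∧ IsVal Z ∧ TransInv Z ∧ DualTransInv Z ∧
  (∀ u : ℝ → EReal, IsLC u → (∃ x : ℝ, edom u = {x}) → Z u = 0) ∧
  (∀ a b : ℝ, a ≤ b → Z (eIndicator (Set.Icc a b)) = 0) ∧
  (∀ a m : ℝ, 0 < a → 0 < m →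
    Z (fun x => ((a * (x ^ 2 / 2) : ℝ) : EReal) + eIndicator (Set.Icc (-m) m) x) =
      2 * m * ζ a)

/-!
The functional is `Z u = ∫ ζ(u'')`, where `u''` is the absolutely continuous part of the second
derivative. Replacing `u''` by the difference quotient of `u'` with step `h` yields a functional
that is continuous with respect to `τ`-convergence. These functionals decrease when `h` is halved,
because `ζ` is concave and the quotient with step `h` is the mean of two quotients with step
`h / 2`; they tend to `Z u`, because `ζ(t) = o(t)` makes the singular part of the second derivative
negligible. So `Z` is an infimum of continuous functionals, hence upper semicontinuous.

For uniqueness, let `Z'` be another such functional. It is determined on parabolas, hence on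
convex quadratic splines. Interpolating `u` by such splines, upper semicontinuity bounds `Z' u`
from below by the limit of Riemann sums of `∫ ζ(u'')`. Conversely, were `Z'` much larger than `ζ`
predicts on arbitrarily short cells, then copies of one such cell, placed side by side so as to
approximate a parabola, would contradict upper semicontinuity at that parabola. So `Z'` is
squeezed between the same bounds as `Z`.
-/

/-! ### Functions restricted to a compact interval -/

/-- The function equal to `f` on `[a, b]` and to `⊤` elsewhere. It is written as a sum with the
indicator function so that it agrees by definition with the functions in `GoodVal`. -/
def onIcc (f : ℝ → ℝ) (a b : ℝ) : ℝ → EReal := fun x => (f x : EReal) + eIndicator (Set.Icc a b) x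

lemma onIcc_of_mem {f : ℝ → ℝ} {a b x : ℝ} (h : x ∈ Set.Icc a b) :
    onIcc f a b x = (f x : EReal) := by
  rw [onIcc, eIndicator, if_pos h, add_zero]

lemma onIcc_of_notMem {f : ℝ → ℝ} {a b x : ℝ} (h : x ∉ Set.Icc a b) : onIcc f a b x = ⊤ := by
  rw [onIcc, eIndicator, if_neg h, EReal.coe_add_top]

lemma coe_le_onIcc (f : ℝ → ℝ) (a b x : ℝ) : (f x : EReal) ≤ onIcc f a b x := by
  by_cases h : x ∈ Set.Icc a b
  · rw [onIcc_of_mem h]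
  · rw [onIcc_of_notMem h]; exact le_top

lemma edom_onIcc (f : ℝ → ℝ) (a b : ℝ) : edom (onIcc f a b) = Set.Icc a b := by
  ext x
  by_cases h : x ∈ Set.Icc a b
  · simp only [edom, Set.mem_ofPred_eq, onIcc_of_mem h, EReal.coe_lt_top, h]
  · simp only [edom, Set.mem_ofPred_eq, onIcc_of_notMem h, lt_self_iff_false, h]

lemma onIcc_congr {f g : ℝ → ℝ} {a b : ℝ} (h : Set.EqOn f g (Set.Icc a b)) :
    onIcc f a b = onIcc g a b := by
  ext1 x
  by_cases hx : x ∈ Set.Icc a b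
  · rw [onIcc_of_mem hx, onIcc_of_mem hx, h hx]
  · rw [onIcc_of_notMem hx, onIcc_of_notMem hx]

lemma toReal_onIcc {f : ℝ → ℝ} {a b x : ℝ} (h : x ∈ Set.Icc a b) :
    (onIcc f a b x).toReal = f x := by
  rw [onIcc_of_mem h, EReal.toReal_coe]

lemma onIcc_zero_eq_eIndicator (a b : ℝ) : onIcc 0 a b = eIndicator (Set.Icc a b) := by
  ext1 x
  rw [onIcc, Pi.zero_apply, EReal.coe_zero, zero_add]

lemma onIcc_sub (f : ℝ → ℝ) (a b y : ℝ) :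
    (fun x => onIcc f a b (x - y)) = onIcc (fun x => f (x - y)) (a + y) (b + y) := by
  ext1 x
  by_cases hx : x - y ∈ Set.Icc a b
  · rw [onIcc_of_mem hx, onIcc_of_mem ⟨by linarith [hx.1], by linarith [hx.2]⟩]
  · rw [onIcc_of_notMem hx,
      onIcc_of_notMem fun h => hx ⟨by linarith [h.1], by linarith [h.2]⟩]

lemma onIcc_add (f g : ℝ → ℝ) (a b : ℝ) :
    (fun x => onIcc f a b x + (g x : EReal)) = onIcc (fun x => f x + g x) a b := by
  ext1 x
  rw [onIcc, onIcc, EReal.coe_add, add_right_comm]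

lemma lipBound_onIcc {f : ℝ → ℝ} {a b M : ℝ}
    (h : ∀ x ∈ Set.Icc a b, ∀ y ∈ Set.Icc a b, |f x - f y| ≤ M * |x - y|) :
    LipBound (onIcc f a b) M := by
  intro x hx y hy
  rw [edom_onIcc] at hx hy
  rw [toReal_onIcc (interior_subset hx), toReal_onIcc (interior_subset hy), Real.norm_eq_abs]
  exact h x (interior_subset hx) y (interior_subset hy)

/-! ### One-sided derivatives of convex functions -/

/-- The right derivative, the canonical choice of a subgradient of a convex function on `ℝ`. -/
def rightDeriv (f : ℝ → ℝ) (x : ℝ) : ℝ := derivWithin f (Set.Ioi x) x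

lemma rightDeriv_eq_of_hasDerivAt {f : ℝ → ℝ} {x m : ℝ} (h : HasDerivAt f m x) :
    rightDeriv f x = m :=
  h.hasDerivWithinAt.derivWithin (uniqueDiffWithinAt_Ioi x)

section ConvexOnUniv

variable {f : ℝ → ℝ} (hf : ConvexOn ℝ Set.univ f)
include hf

lemma hasDerivWithinAt_rightDeriv (x : ℝ) :
    HasDerivWithinAt f (rightDeriv f x) (Set.Ioi x) x :=
  hf.hasDerivWithinAt_rightDeriv_of_mem_interior (by rw [interior_univ]; trivial)

lemma monotone_rightDeriv : Monotone (rightDeriv f) := by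
  have h := hf.monotoneOn_rightDeriv
  rwa [interior_univ, monotoneOn_univ] at h

lemma tangent_le (x y : ℝ) : f x + rightDeriv f x * (y - x) ≤ f y := by
  have hint : ∀ z : ℝ, z ∈ interior Set.univ := fun z => by rw [interior_univ]; trivial
  rcases lt_trichotomy x y with h | rfl | h
  · have hslope := hf.rightDeriv_le_slope_of_mem_interior (hint x) (Set.mem_univ y) h
    rw [slope_def_field, le_div_iff₀ (by linarith)] at hslope
    exact le_sub_iff_add_le'.mp hslope
  · rw [sub_self, mul_zero, add_zero]
  · have hslope := (hf.slope_le_leftDeriv_of_mem_interior (Set.mem_univ y) (hint x) h).trans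
      (hf.leftDeriv_le_rightDeriv_of_mem_interior (hint x))
    rw [slope_def_field, div_le_iff₀ (by linarith)] at hslope
    unfold rightDeriv
    linarith

lemma continuous_of_convexOn_univ : Continuous f := by
  have h := hf.continuousOn_interior
  rwa [interior_univ, continuousOn_univ] at h

lemma abs_sub_le_of_rightDeriv_bounds {a b L : ℝ} (ha : -L ≤ rightDeriv f a)
    (hb : rightDeriv f b ≤ L) :
    ∀ x ∈ Set.Icc a b, ∀ y ∈ Set.Icc a b, |f x - f y| ≤ L * |x - y| := by
  have hsub : ∀ x ∈ Set.Icc a b, ∀ y, f x - f y ≤ L * |x - y| := fun x hx y => by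
    have habs : |rightDeriv f x| ≤ L := abs_le.mpr
      ⟨ha.trans (monotone_rightDeriv hf hx.1), (monotone_rightDeriv hf hx.2).trans hb⟩
    calc f x - f y ≤ rightDeriv f x * (x - y) := by linarith [tangent_le hf x y]
      _ ≤ |rightDeriv f x| * |x - y| := by rw [← abs_mul]; exact le_abs_self _
      _ ≤ L * |x - y| := by gcongr
  intro x hx y hy
  exact abs_sub_le_iff.mpr ⟨hsub x hx y, by rw [abs_sub_comm]; exact hsub y hy x⟩

lemma rightDeriv_add_affine (m c x : ℝ) :
    rightDeriv (fun y => f y + (m * y + c)) x = rightDeriv f x + m := by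
  have haff : HasDerivAt (fun y => m * y + c) m x := by
    simpa only [mul_one, id_eq] using ((hasDerivAt_id x).const_mul m).add_const c
  exact ((hasDerivWithinAt_rightDeriv hf x).add haff.hasDerivWithinAt).derivWithin
    (uniqueDiffWithinAt_Ioi x)

lemma convexOn_add_affine (m c : ℝ) : ConvexOn ℝ Set.univ fun y => f y + (m * y + c) :=
  hf.add (((LinearMap.mul ℝ ℝ m).convexOn convex_univ).add (convexOn_const c convex_univ))

lemma convexOn_comp_sub (y : ℝ) : ConvexOn ℝ Set.univ fun x => f (x - y) := by
  simpa only [Set.preimage_univ, Function.comp_def, ← sub_eq_add_neg] using hf.translate_left (-y)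

end ConvexOnUniv

lemma rightDeriv_comp_sub (f : ℝ → ℝ) (y x : ℝ) :
    rightDeriv (fun z => f (z - y)) x = rightDeriv f (x - y) := by
  rw [rightDeriv, rightDeriv, derivWithin_comp_sub_const, ← Set.image_vadd]
  simp only [vadd_eq_add, neg_add_eq_sub, Set.image_sub_const_Ioi]

lemma convexOn_of_subgradient {f : ℝ → ℝ} (m : ℝ → ℝ) (h : ∀ x y, f x + m x * (y - x) ≤ f y) :
    ConvexOn ℝ Set.univ f := by
  refine ⟨convex_univ, fun x _ y _ s t hs ht hst => ?_⟩
  obtain rfl : t = 1 - s := by linarith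
  simp only [smul_eq_mul]
  nlinarith [h (s * x + (1 - s) * y) x, h (s * x + (1 - s) * y) y]

/-! ### Membership in `LC` and `τ`-convergence -/

section IsLCOnIcc

variable {f : ℝ → ℝ} {a b : ℝ}

lemma onIcc_convex_combination_le (hf : ConvexOn ℝ Set.univ f) {x y t : ℝ} (ht0 : 0 < t)
    (ht1 : t < 1) :
    onIcc f a b (t • x + (1 - t) • y) ≤
      (t : EReal) * onIcc f a b x + ((1 - t : ℝ) : EReal) * onIcc f a b y := by
  have ht1' : 0 < 1 - t := by linarith
  by_cases hx : x ∈ Set.Icc a b <;> by_cases hy : y ∈ Set.Icc a b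
  · have hz : t • x + (1 - t) • y ∈ Set.Icc a b :=
      convex_Icc a b hx hy ht0.le ht1'.le (by ring)
    rw [onIcc_of_mem hx, onIcc_of_mem hy, onIcc_of_mem hz]
    exact_mod_cast hf.2 (Set.mem_univ x) (Set.mem_univ y) ht0.le ht1'.le (by ring)
  · rw [onIcc_of_mem hx, onIcc_of_notMem hy, EReal.coe_mul_top_of_pos ht1', ← EReal.coe_mul,
      EReal.coe_add_top]
    exact le_top
  · rw [onIcc_of_notMem hx, onIcc_of_mem hy, EReal.coe_mul_top_of_pos ht0, ← EReal.coe_mul,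
      EReal.top_add_coe]
    exact le_top
  · rw [onIcc_of_notMem hx, onIcc_of_notMem hy, EReal.coe_mul_top_of_pos ht0,
      EReal.coe_mul_top_of_pos ht1', EReal.top_add_top]
    exact le_top

lemma lowerSemicontinuous_onIcc (hf : Continuous f) : LowerSemicontinuous (onIcc f a b) := by
  intro x c hc
  by_cases hx : x ∈ Set.Icc a b
  · rw [onIcc_of_mem hx] at hc
    have hcont : Continuous fun z => (f z : EReal) := continuous_coe_real_ereal.comp hf
    filter_upwards [hcont.continuousAt.eventually (lt_mem_nhds hc)] with z hz
    exact hz.trans_le (coe_le_onIcc f a b z)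
  · rw [onIcc_of_notMem hx] at hc
    filter_upwards [isClosed_Icc.isOpen_compl.mem_nhds hx] with z hz
    rwa [onIcc_of_notMem hz]

lemma isLC_onIcc (hf : ConvexOn ℝ Set.univ f) (hab : a ≤ b) : IsLC (onIcc f a b) := by
  refine ⟨fun x y t => onIcc_convex_combination_le hf,
    lowerSemicontinuous_onIcc (continuous_of_convexOn_univ hf),
    fun x => ((EReal.bot_lt_coe _).trans_le (coe_le_onIcc f a b x)).ne',
    ⟨a, by rw [onIcc_of_mem (Set.left_mem_Icc.mpr hab)]; exact EReal.coe_ne_top _⟩,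
    by rw [edom_onIcc]; exact isCompact_Icc,
    max |rightDeriv f a| |rightDeriv f b| + 1, by positivity,
    lipBound_onIcc (abs_sub_le_of_rightDeriv_bounds hf ?_ ?_)⟩
  · linarith [neg_abs_le (rightDeriv f a), le_max_left |rightDeriv f a| |rightDeriv f b|]
  · linarith [le_abs_self (rightDeriv f b), le_max_right |rightDeriv f a| |rightDeriv f b|]

end IsLCOnIcc

/-- The retraction of `ℝ` onto `[a, b]` (when `a ≤ b`); unlike `Set.projIcc` it is real valued. -/
def clamp (a b x : ℝ) : ℝ := max a (min b x)

lemma clamp_mem_Icc {a b : ℝ} (hab : a ≤ b) (x : ℝ) : clamp a b x ∈ Set.Icc a b :=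
  ⟨le_max_left _ _, max_le hab (min_le_left _ _)⟩

lemma clamp_of_mem {a b x : ℝ} (h : x ∈ Set.Icc a b) : clamp a b x = x := by
  rw [clamp, min_eq_right h.2, max_eq_right h.1]

lemma clamp_of_le {a b x : ℝ} (hab : a ≤ b) (h : x ≤ a) : clamp a b x = a := by
  rw [clamp, min_eq_right (h.trans hab), max_eq_left h]

lemma clamp_of_ge {a b x : ℝ} (hab : a ≤ b) (h : b ≤ x) : clamp a b x = b := by
  rw [clamp, min_eq_left h, max_eq_right hab]

section TauConvOnIcc

variable {F : ℕ → ℝ → ℝ} {f : ℝ → ℝ} {A B : ℕ → ℝ} {a b : ℝ}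

lemma eventually_onIcc_eq_top (hA : Tendsto A atTop (𝓝 a)) (hB : Tendsto B atTop (𝓝 b)) {x : ℝ}
    (hx : x ∉ Set.Icc a b) {y : ℕ → ℝ} (hy : Tendsto y atTop (𝓝 x)) :
    ∀ᶠ k in atTop, onIcc (F k) (A k) (B k) (y k) = ⊤ := by
  rw [Set.mem_Icc, not_and_or, not_le, not_le] at hx
  rcases hx with hx | hx
  · filter_upwards [hy.eventually_lt hA hx] with k hk
    exact onIcc_of_notMem fun h => hk.not_ge h.1
  · filter_upwards [hB.eventually_lt hy hx] with k hk
    exact onIcc_of_notMem fun h => hk.not_ge h.2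

variable {e : ℕ → ℝ} (he : Tendsto e atTop (𝓝 0))
  (hFe : ∀ k, ∀ x ∈ Set.Icc (A k) (B k), |F k x - f x| ≤ e k) (hf : Continuous f)
include he hFe hf

lemma onIcc_le_liminf (hA : Tendsto A atTop (𝓝 a)) (hB : Tendsto B atTop (𝓝 b)) {x : ℝ}
    {y : ℕ → ℝ} (hy : Tendsto y atTop (𝓝 x)) :
    onIcc f a b x ≤ liminf (fun k => onIcc (F k) (A k) (B k) (y k)) atTop := by
  by_cases hx : x ∈ Set.Icc a b
  · have hlim : Tendsto (fun k => ((f (y k) - e k : ℝ) : EReal)) atTop (𝓝 (f x : EReal)) := by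
      have h : Tendsto (fun k => f (y k) - e k) atTop (𝓝 (f x)) := by
        simpa only [sub_zero, Function.comp_apply] using ((hf.tendsto x).comp hy).sub he
      exact (continuous_coe_real_ereal.tendsto _).comp h
    rw [onIcc_of_mem hx, ← hlim.liminf_eq]
    refine liminf_le_liminf (Eventually.of_forall fun k => ?_)
    by_cases hk : y k ∈ Set.Icc (A k) (B k)
    · rw [onIcc_of_mem hk]
      exact_mod_cast (by linarith [(abs_le.mp (hFe k _ hk)).1] : f (y k) - e k ≤ F k (y k))
    · rw [onIcc_of_notMem hk]; exact le_top
  · have htop : Tendsto (fun k => onIcc (F k) (A k) (B k) (y k)) atTop (𝓝 ⊤) :=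
      tendsto_const_nhds.congr' ((eventually_onIcc_eq_top hA hB hx hy).mono fun _ hk => hk.symm)
    rw [htop.liminf_eq]
    exact le_top

lemma exists_tendsto_onIcc (hAB : ∀ k, A k ≤ B k) (hA : Tendsto A atTop (𝓝 a))
    (hB : Tendsto B atTop (𝓝 b)) (x : ℝ) :
    ∃ y : ℕ → ℝ, Tendsto y atTop (𝓝 x) ∧
      Tendsto (fun k => onIcc (F k) (A k) (B k) (y k)) atTop (𝓝 (onIcc f a b x)) := by
  by_cases hx : x ∈ Set.Icc a b
  · have hy : Tendsto (fun k => clamp (A k) (B k) x) atTop (𝓝 x) := by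
      have h := hA.max (hB.min (tendsto_const_nhds (x := x)))
      rwa [min_eq_right hx.2, max_eq_right hx.1] at h
    have hdiff : Tendsto (fun k => F k (clamp (A k) (B k) x) - f (clamp (A k) (B k) x)) atTop
        (𝓝 0) :=
      squeeze_zero_norm (fun k => hFe k _ (clamp_mem_Icc (hAB k) x)) he
    have hlim : Tendsto (fun k => F k (clamp (A k) (B k) x)) atTop (𝓝 (f x)) := by
      simpa only [sub_add_cancel, zero_add, Function.comp_apply] using
        hdiff.add ((hf.tendsto x).comp hy)
    refine ⟨_, hy, ?_⟩
    simp only [onIcc_of_mem (clamp_mem_Icc (hAB _) x), onIcc_of_mem hx]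
    exact (continuous_coe_real_ereal.tendsto _).comp hlim
  · refine ⟨fun _ => x, tendsto_const_nhds, ?_⟩
    rw [onIcc_of_notMem hx]
    exact tendsto_const_nhds.congr'
      ((eventually_onIcc_eq_top hA hB hx tendsto_const_nhds).mono fun _ hk => hk.symm)

end TauConvOnIcc

lemma tauConv_onIcc {F : ℕ → ℝ → ℝ} {f : ℝ → ℝ} {A B e : ℕ → ℝ} {a b M : ℝ}
    (hF : ∀ k, ConvexOn ℝ Set.univ (F k)) (hf : ConvexOn ℝ Set.univ f)
    (hAB : ∀ k, A k ≤ B k) (hab : a ≤ b) (hA : Tendsto A atTop (𝓝 a))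
    (hB : Tendsto B atTop (𝓝 b)) (he : Tendsto e atTop (𝓝 0))
    (hFe : ∀ k, ∀ x ∈ Set.Icc (A k) (B k), |F k x - f x| ≤ e k) (hM : 0 < M)
    (hL : ∀ k, ∀ x ∈ Set.Icc (A k) (B k), ∀ y ∈ Set.Icc (A k) (B k),
      |F k x - F k y| ≤ M * |x - y|) :
    TauConv (fun k => onIcc (F k) (A k) (B k)) (onIcc f a b) :=
  have hcont := continuous_of_convexOn_univ hf
  ⟨fun k => isLC_onIcc (hF k) (hAB k), isLC_onIcc hf hab,
    fun _ _ hy => onIcc_le_liminf he hFe hcont hA hB hy,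
    fun x => exists_tendsto_onIcc he hFe hcont hAB hA hB x,
    M, hM, fun k => lipBound_onIcc (hL k)⟩

/-! ### Extensions with prescribed outer slope -/

lemma abs_sub_clamp_add_abs_clamp_sub {a b y : ℝ} (hy : y ∈ Set.Icc a b) (x : ℝ) :
    |x - clamp a b x| + |clamp a b x - y| = |x - y| := by
  have hab : a ≤ b := hy.1.trans hy.2
  rcases le_total x a with hx | hx
  · rw [clamp_of_le hab hx, abs_of_nonpos (by linarith), abs_of_nonpos (by linarith [hy.1]),
      abs_of_nonpos (by linarith [hy.1])]
    ring
  rcases le_total x b with hx' | hx'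
  · rw [clamp_of_mem ⟨hx, hx'⟩, sub_self, abs_zero, zero_add]
  · rw [clamp_of_ge hab hx', abs_of_nonneg (by linarith), abs_of_nonneg (by linarith [hy.2]),
      abs_of_nonneg (by linarith [hy.2])]
    ring

/-- `f` is a convex function with Lipschitz constant `M` that is affine of slope `-M` to the left
of `a` and of slope `M` to the right of `b`. Every `u ∈ LC(ℝ)` is the restriction of such an `f` to
its domain, and the distributional second derivatives of the extensions depend continuously on
`u`. -/
structure IsSlopeExtension (f : ℝ → ℝ) (a b M : ℝ) : Prop where
  le : a ≤ b
  convexOn : ConvexOn ℝ Set.univ f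
  lipschitz : ∀ x y, |f x - f y| ≤ M * |x - y|
  left : ∀ x ≤ a, f x = f a + M * (a - x)
  right : ∀ x, b ≤ x → f x = f b + M * (x - b)

lemma IsSlopeExtension.eq_clamp {f : ℝ → ℝ} {a b M : ℝ} (h : IsSlopeExtension f a b M) (x : ℝ) :
    f x = f (clamp a b x) + M * |x - clamp a b x| := by
  rcases le_total x a with hx | hx
  · rw [clamp_of_le h.le hx, abs_of_nonpos (by linarith), neg_sub, h.left x hx]
  rcases le_total x b with hx' | hx'
  · rw [clamp_of_mem ⟨hx, hx'⟩, sub_self, abs_zero, mul_zero, add_zero]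
  · rw [clamp_of_ge h.le hx', abs_of_nonneg (by linarith), h.right x hx']

/-- The extension of `g` from `[a, b]` to `ℝ` with slope `M` away from `[a, b]`. -/
def slopeExtend (g : ℝ → ℝ) (a b M x : ℝ) : ℝ := g (clamp a b x) + M * |x - clamp a b x|

lemma slopeExtend_of_mem {g : ℝ → ℝ} {a b M x : ℝ} (hx : x ∈ Set.Icc a b) :
    slopeExtend g a b M x = g x := by
  rw [slopeExtend, clamp_of_mem hx, sub_self, abs_zero, mul_zero, add_zero]

section SlopeExtend

variable {g : ℝ → ℝ} {a b M : ℝ}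
  (hl : ∀ x ∈ Set.Icc a b, ∀ y ∈ Set.Icc a b, |g x - g y| ≤ M * |x - y|)
include hl

lemma slopeExtend_le {y : ℝ} (hy : y ∈ Set.Icc a b) (x : ℝ) :
    slopeExtend g a b M x ≤ g y + M * |x - y| := by
  have hg := (abs_le.mp (hl _ (clamp_mem_Icc (hy.1.trans hy.2) x) y hy)).2
  rw [slopeExtend, ← abs_sub_clamp_add_abs_clamp_sub hy x]
  linarith

lemma abs_slopeExtend_sub_le (hab : a ≤ b) (hM : 0 ≤ M) (x y : ℝ) :
    |slopeExtend g a b M x - slopeExtend g a b M y| ≤ M * |x - y| := by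
  have hsub : ∀ x y, slopeExtend g a b M x - slopeExtend g a b M y ≤ M * |x - y| := fun x y => by
    have hx := slopeExtend_le hl (clamp_mem_Icc hab y) x
    have hy : slopeExtend g a b M y = g (clamp a b y) + M * |y - clamp a b y| := rfl
    nlinarith [abs_sub_le x y (clamp a b y)]
  exact abs_sub_le_iff.mpr ⟨hsub x y, by rw [abs_sub_comm]; exact hsub y x⟩

lemma convexOn_slopeExtend (hab : a ≤ b) (hM : 0 ≤ M) (hg : ConvexOn ℝ (Set.Icc a b) g) :
    ConvexOn ℝ Set.univ (slopeExtend g a b M) := by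
  refine ⟨convex_univ, fun x _ y _ s t hs ht hst => ?_⟩
  simp only [smul_eq_mul]
  set x' := clamp a b x
  set y' := clamp a b y
  have hx' : x' ∈ Set.Icc a b := clamp_mem_Icc hab x
  have hy' : y' ∈ Set.Icc a b := clamp_mem_Icc hab y
  have hdist : |s * x + t * y - (s * x' + t * y')| ≤ s * |x - x'| + t * |y - y'| := by
    calc |s * x + t * y - (s * x' + t * y')| = |s * (x - x') + t * (y - y')| := by ring_nf
      _ ≤ |s * (x - x')| + |t * (y - y')| := abs_add_le _ _
      _ = s * |x - x'| + t * |y - y'| := by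
        rw [abs_mul, abs_mul, abs_of_nonneg hs, abs_of_nonneg ht]
  calc slopeExtend g a b M (s * x + t * y)
      ≤ g (s * x' + t * y') + M * |s * x + t * y - (s * x' + t * y')| :=
        slopeExtend_le hl (convex_Icc a b hx' hy' hs ht hst) _
    _ ≤ (s * g x' + t * g y') + M * (s * |x - x'| + t * |y - y'|) := by
        gcongr
        exact hg.2 hx' hy' hs ht hst
    _ = s * slopeExtend g a b M x + t * slopeExtend g a b M y := by
        simp only [slopeExtend]; ring

lemma isSlopeExtension_slopeExtend (hab : a ≤ b) (hM : 0 ≤ M) (hg : ConvexOn ℝ (Set.Icc a b) g) :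
    IsSlopeExtension (slopeExtend g a b M) a b M where
  le := hab
  convexOn := convexOn_slopeExtend hl hab hM hg
  lipschitz := abs_slopeExtend_sub_le hl hab hM
  left x hx := by
    rw [slopeExtend_of_mem (Set.left_mem_Icc.mpr hab), slopeExtend, clamp_of_le hab hx,
      abs_of_nonpos (by linarith), neg_sub]
  right x hx := by
    rw [slopeExtend_of_mem (Set.right_mem_Icc.mpr hab), slopeExtend, clamp_of_ge hab hx,
      abs_of_nonneg (by linarith)]

end SlopeExtend

/-! ### The functions in `LC(ℝ)` -/

section IsLC

variable {u : ℝ → EReal} (hu : IsLC u)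
include hu

lemma IsLC.coe_toReal {x : ℝ} (hx : x ∈ edom u) : ((u x).toReal : EReal) = u x :=
  EReal.coe_toReal (ne_of_lt hx) (hu.2.2.1 x)

lemma IsLC.convex_edom : Convex ℝ (edom u) := by
  rw [convex_iff_forall_pos]
  intro x hx y hy s t hs ht hst
  obtain rfl : t = 1 - s := by linarith
  refine (hu.1 x y s hs (by linarith)).trans_lt ?_
  rw [← hu.coe_toReal hx, ← hu.coe_toReal hy, ← EReal.coe_mul, ← EReal.coe_mul, ← EReal.coe_add]
  exact EReal.coe_lt_top _

lemma IsLC.exists_edom_eq_Icc : ∃ a b, a ≤ b ∧ edom u = Set.Icc a b := by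
  obtain ⟨-, -, -, ⟨x, hx⟩, hcompact, -⟩ := id hu
  have hne : (edom u).Nonempty := ⟨x, lt_top_iff_ne_top.mpr hx⟩
  exact ⟨sInf (edom u), sSup (edom u), csInf_le_csSup hne hcompact.bddBelow hcompact.bddAbove,
    eq_Icc_of_connected_compact ⟨hne, hu.convex_edom.isPreconnected⟩ hcompact⟩

lemma IsLC.convexOn_toReal : ConvexOn ℝ (edom u) fun x => (u x).toReal := by
  refine convexOn_iff_forall_pos.mpr ⟨hu.convex_edom, fun x hx y hy s t hs ht hst => ?_⟩
  have hz := hu.convex_edom hx hy hs.le ht.le hst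
  obtain rfl : t = 1 - s := by linarith
  have h := hu.1 x y s hs (by linarith)
  rw [← hu.coe_toReal hx, ← hu.coe_toReal hy, ← hu.coe_toReal hz] at h
  exact_mod_cast h

variable {M : ℝ} (hL : LipBound u M) {a b : ℝ} (hd : edom u = Set.Icc a b)
include hL hd

lemma IsLC.toReal_le_add_mul_abs {x y : ℝ} (hx : x ∈ Set.Icc a b) (hy : y ∈ Set.Ioo a b) :
    (u x).toReal ≤ (u y).toReal + M * |x - y| := by
  have hclosed : IsClosed {z | u z ≤ (((u y).toReal + M * |z - y| : ℝ) : EReal)} :=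
    hu.2.1.isClosed_epigraph.preimage (f := fun z : ℝ =>
      (z, (((u y).toReal + M * |z - y| : ℝ) : EReal))) <| continuous_id.prodMk <|
        continuous_coe_real_ereal.comp (by fun_prop)
  have hIoo : Set.Ioo a b ⊆ {z | u z ≤ (((u y).toReal + M * |z - y| : ℝ) : EReal)} := by
    intro z hz
    rw [← interior_Icc, ← hd] at hz hy
    rw [Set.mem_ofPred_eq, ← hu.coe_toReal (interior_subset hz), EReal.coe_le_coe_iff]
    exact sub_le_iff_le_add'.mp ((abs_le.mp (hL z hz y hy)).2)
  have hx' := closure_minimal hIoo hclosed (closure_Ioo (hy.1.trans hy.2).ne ▸ hx)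
  rw [← hd] at hx
  rwa [Set.mem_ofPred_eq, ← hu.coe_toReal hx, EReal.coe_le_coe_iff] at hx'

lemma IsLC.abs_toReal_sub_le_of_mem_Ioo {x y : ℝ} (hx : x ∈ Set.Icc a b) (hy : y ∈ Set.Ioo a b) :
    |(u x).toReal - (u y).toReal| ≤ M * |x - y| := by
  set m := (1 / 2 : ℝ) * x + (1 / 2) * y with hm
  have hmid : (u m).toReal ≤ (1 / 2) * (u x).toReal + (1 / 2) * (u y).toReal :=
    hu.convexOn_toReal.2 (hd ▸ hx) (hd ▸ Set.Ioo_subset_Icc_self hy) (by norm_num) (by norm_num)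
      (by norm_num)
  have hm_mem : m ∈ Set.Ioo a b :=
    ⟨by linarith [hx.1, hy.1], by linarith [hx.2, hy.2]⟩
  have hym := hu.toReal_le_add_mul_abs hL hd (Set.Ioo_subset_Icc_self hy) hm_mem
  have habs : |y - m| = 1 / 2 * |x - y| := by
    rw [show y - m = -(1 / 2 * (x - y)) by rw [hm]; ring, abs_neg, abs_mul,
      abs_of_pos one_half_pos]
  rw [habs] at hym
  rw [abs_le]
  constructor <;> linarith [hu.toReal_le_add_mul_abs hL hd hx hy]

lemma IsLC.abs_toReal_sub_le {x y : ℝ} (hx : x ∈ Set.Icc a b) (hy : y ∈ Set.Icc a b) :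
    |(u x).toReal - (u y).toReal| ≤ M * |x - y| := by
  rcases eq_or_ne x y with rfl | hxy
  · simp only [sub_self, abs_zero, mul_zero, le_refl]
  have hm : (x + y) / 2 ∈ Set.Ioo a b := by
    rcases hxy.lt_or_gt with h | h
    · exact ⟨by linarith [hx.1], by linarith [hy.2]⟩
    · exact ⟨by linarith [hy.1], by linarith [hx.2]⟩
  have hxm := hu.abs_toReal_sub_le_of_mem_Ioo hL hd hx hm
  have hym := hu.abs_toReal_sub_le_of_mem_Ioo hL hd hy hm
  rw [show x - (x + y) / 2 = (x - y) / 2 by ring, abs_div, abs_two] at hxm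
  rw [show y - (x + y) / 2 = -((x - y) / 2) by ring, abs_neg, abs_div, abs_two,
    abs_sub_comm] at hym
  linarith [abs_sub_le (u x).toReal (u ((x + y) / 2)).toReal (u y).toReal]

end IsLC

lemma IsLC.exists_isSlopeExtension {u : ℝ → EReal} (hu : IsLC u) {M : ℝ} (hM : 0 ≤ M)
    (hL : LipBound u M) :
    ∃ f a b, IsSlopeExtension f a b M ∧ u = onIcc f a b := by
  obtain ⟨a, b, hab, hd⟩ := hu.exists_edom_eq_Icc
  refine ⟨_, a, b, isSlopeExtension_slopeExtend (g := fun x => (u x).toReal)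
    (fun x hx y hy => hu.abs_toReal_sub_le hL hd hx hy) hab hM (hd ▸ hu.convexOn_toReal), ?_⟩
  ext1 x
  by_cases hx : x ∈ Set.Icc a b
  · rw [onIcc_of_mem hx, slopeExtend_of_mem hx, hu.coe_toReal (hd ▸ hx)]
  · rw [onIcc_of_notMem hx]
    rw [← hd] at hx
    exact not_lt_top_iff.mp hx

lemma IsLC.exists_eq_onIcc {u : ℝ → EReal} (hu : IsLC u) :
    ∃ f a b, a ≤ b ∧ ConvexOn ℝ Set.univ f ∧ u = onIcc f a b := by
  obtain ⟨M, hM, hL⟩ := hu.2.2.2.2.2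
  obtain ⟨f, a, b, hf, rfl⟩ := hu.exists_isSlopeExtension hM.le hL
  exact ⟨f, a, b, hf.le, hf.convexOn, rfl⟩

/-! ### The class `Conc` -/

lemma sum_mul_map_div_le_of_concaveOn {ζ : ℝ → ℝ} (hζ : ConcaveOn ℝ (Set.Ici 0) ζ) {ι : Type*}
    {t : Finset ι} (ht : t.Nonempty) {w s : ι → ℝ} (hw : ∀ i ∈ t, 0 < w i) (hs : ∀ i ∈ t, 0 ≤ s i) :
    ∑ i ∈ t, w i * ζ (s i / w i) ≤ (∑ i ∈ t, w i) * ζ ((∑ i ∈ t, s i) / ∑ i ∈ t, w i) := by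
  have hW : 0 < ∑ i ∈ t, w i := Finset.sum_pos hw ht
  have h := hζ.le_map_centerMass (p := fun i => s i / w i) (fun i hi => (hw i hi).le) hW
    (fun i hi => div_nonneg (hs i hi) (hw i hi).le)
  have hsum : ∑ i ∈ t, w i * (s i / w i) = ∑ i ∈ t, s i :=
    Finset.sum_congr rfl fun i hi => mul_div_cancel₀ _ (hw i hi).ne'
  simp only [Finset.centerMass, smul_eq_mul, Function.comp_apply, hsum] at h
  rwa [inv_mul_le_iff₀ hW, inv_mul_eq_div] at h

section IsConc

variable {ζ : ℝ → ℝ} (hζ : IsConc ζ)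
include hζ

lemma IsConc.map_zero : ζ 0 = 0 := by
  refine le_antisymm ?_ (hζ.1 0 Set.self_mem_Ici)
  have hlim : Tendsto (fun t : ℝ => t * ζ 1 + (1 - t) * ζ 0) (𝓝[>] 0) (𝓝 (ζ 0)) := by
    have hcont : Continuous fun t : ℝ => t * ζ 1 + (1 - t) * ζ 0 := by fun_prop
    simpa only [sub_zero, one_mul, zero_mul, zero_add] using
      (hcont.tendsto 0).mono_left nhdsWithin_le_nhds
  refine le_of_tendsto_of_tendsto hlim hζ.2.2.1 ?_
  filter_upwards [Ioo_mem_nhdsGT (zero_lt_one (α := ℝ))] with t ht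
  simpa only [smul_eq_mul, mul_one, mul_zero, add_zero] using
    hζ.2.1.2 (Set.mem_Ici.mpr zero_le_one) Set.self_mem_Ici ht.1.le (sub_nonneg.mpr ht.2.le)
      (add_sub_cancel t 1)

lemma IsConc.monotoneOn : MonotoneOn ζ (Set.Ici 0) := by
  intro s hs t ht hst
  by_contra! hlt
  have hst : s < t := hst.lt_of_ne (by rintro rfl; exact lt_irrefl _ hlt)
  have hdrop : 0 < ζ s - ζ t := sub_pos.mpr hlt
  set w := ζ t * (t - s) / (ζ s - ζ t) + 1 with hw
  have hw_pos : 0 < w :=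
    add_pos_of_nonneg_of_pos (div_nonneg (mul_nonneg (hζ.1 t ht) (by linarith)) hdrop.le) one_pos
  have hw_mem : t + w ∈ Set.Ici (0 : ℝ) := add_nonneg ht hw_pos.le
  have hslope := hζ.2.1.slope_anti_adjacent hs hw_mem hst (by linarith)
  rw [add_sub_cancel_left, div_le_div_iff₀ hw_pos (by linarith)] at hslope
  have hw_mul : w * (ζ s - ζ t) = ζ t * (t - s) + (ζ s - ζ t) := by
    rw [hw, add_mul, div_mul_cancel₀ _ hdrop.ne', one_mul]
  nlinarith [hζ.1 _ hw_mem]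

lemma IsConc.continuousOn : ContinuousOn ζ (Set.Ici 0) := by
  intro x hx
  rcases (Set.mem_Ici.mp hx).eq_or_lt with rfl | h
  · have h0 : ContinuousWithinAt ζ (Set.Ioi 0) 0 := by
      rw [ContinuousWithinAt, hζ.map_zero]; exact hζ.2.2.1
    exact continuousWithinAt_Ioi_iff_Ici.mp h0
  · have hint := hζ.2.1.continuousOn_interior
    rw [interior_Ici] at hint
    exact (hint.continuousAt (Ioi_mem_nhds h)).continuousWithinAt

end IsConc

/-- The extension of `ζ : [0, ∞) → ℝ` to `ℝ` by the value `ζ 0` on the negative half-line; for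
`ζ ∈ Conc` it is continuous and monotone. -/
def posExt (ζ : ℝ → ℝ) (t : ℝ) : ℝ := ζ (max t 0)

lemma posExt_of_nonneg {ζ : ℝ → ℝ} {t : ℝ} (ht : 0 ≤ t) : posExt ζ t = ζ t := by
  rw [posExt, max_eq_left ht]

section PosExt

variable {ζ : ℝ → ℝ} (hζ : IsConc ζ)
include hζ

lemma posExt_nonneg (t : ℝ) : 0 ≤ posExt ζ t := hζ.1 _ (Set.mem_Ici.mpr (le_max_right _ _))

lemma posExt_zero : posExt ζ 0 = 0 := by rw [posExt, max_self, hζ.map_zero]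

lemma monotone_posExt : Monotone (posExt ζ) := fun _ _ h =>
  hζ.monotoneOn (Set.mem_Ici.mpr (le_max_right _ _)) (Set.mem_Ici.mpr (le_max_right _ _))
    (max_le_max_right 0 h)

lemma continuous_posExt : Continuous (posExt ζ) :=
  hζ.continuousOn.comp_continuous (by fun_prop) fun _ => Set.mem_Ici.mpr (le_max_right _ _)

lemma posExt_add_div_two_le {s t : ℝ} (hs : 0 ≤ s) (ht : 0 ≤ t) :
    (posExt ζ s + posExt ζ t) / 2 ≤ posExt ζ ((s + t) / 2) := by
  rw [posExt_of_nonneg hs, posExt_of_nonneg ht, posExt_of_nonneg (by linarith)]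
  calc (ζ s + ζ t) / 2 = (1 / 2 : ℝ) • ζ s + (1 / 2 : ℝ) • ζ t := by
        simp only [smul_eq_mul]; ring
    _ ≤ ζ ((1 / 2 : ℝ) • s + (1 / 2 : ℝ) • t) :=
        hζ.2.1.2 hs ht (by norm_num) (by norm_num) (by norm_num)
    _ = ζ ((s + t) / 2) := by congr 1; simp only [smul_eq_mul]; ring

lemma exists_posExt_le_posExt_min_add {ε : ℝ} (hε : 0 < ε) :
    ∃ K : ℝ, 0 ≤ K ∧ ∀ t, 0 ≤ t → posExt ζ t ≤ posExt ζ (min t K) + ε * t := by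
  obtain ⟨K, hK⟩ := eventually_atTop.mp
    ((hζ.2.2.2.eventually (gt_mem_nhds hε)).and (eventually_gt_atTop 0))
  refine ⟨K, (hK K le_rfl).2.le, fun t ht => ?_⟩
  rcases le_total t K with htK | htK
  · rw [min_eq_left htK]
    exact le_add_of_nonneg_right (mul_nonneg hε.le ht)
  · rw [posExt_of_nonneg ht]
    linarith [(div_lt_iff₀ (hK t htK).2).mp (hK t htK).1, posExt_nonneg hζ (min t K)]

lemma exists_posExt_le_add : ∃ C : ℝ, ∀ t, 0 ≤ t → posExt ζ t ≤ C + t := by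
  obtain ⟨K, -, hK⟩ := exists_posExt_le_posExt_min_add hζ one_pos
  refine ⟨posExt ζ K, fun t ht => ?_⟩
  linarith [hK t ht, monotone_posExt hζ (min_le_right t K)]

end PosExt

/-! ### Ramps -/

/-- `p` is a convex function vanishing to the left of `c` and affine of slope `s` to the right of
`d`. A convex function on an interval is, up to its tangent at the left end, the sum of ramps
supported on the cells of a partition, and the ramps may be exchanged cell by cell. -/
structure IsRamp (p : ℝ → ℝ) (c d s : ℝ) : Prop where
  le : c ≤ d
  convexOn : ConvexOn ℝ Set.univ p
  eq_zero : ∀ x ≤ c, p x = 0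
  eq_affine : ∀ x, d ≤ x → p x = p d + s * (x - d)

namespace IsRamp

variable {p q : ℝ → ℝ} {c d s : ℝ} (hp : IsRamp p c d s)
include hp

lemma rightDeriv_eq_zero {x : ℝ} (hx : x < c) : rightDeriv p x = 0 := by
  refine rightDeriv_eq_of_hasDerivAt ((hasDerivAt_const x (0 : ℝ)).congr_of_eventuallyEq ?_)
  filter_upwards [Iio_mem_nhds hx] with y hy using hp.eq_zero y (le_of_lt hy)

lemma rightDeriv_eq_slope {x : ℝ} (hx : d < x) : rightDeriv p x = s := by
  have haff : HasDerivAt (fun y => p d + s * (y - d)) s x := by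
    simpa only [mul_one, id_eq] using (((hasDerivAt_id x).sub_const d).const_mul s).const_add (p d)
  refine rightDeriv_eq_of_hasDerivAt (haff.congr_of_eventuallyEq ?_)
  filter_upwards [Ioi_mem_nhds hx] with y hy using hp.eq_affine y (le_of_lt hy)

lemma slope_nonneg : 0 ≤ s := by
  have h := monotone_rightDeriv hp.convexOn (by linarith [hp.le] : c - 1 ≤ d + 1)
  rwa [hp.rightDeriv_eq_zero (by linarith), hp.rightDeriv_eq_slope (by linarith)] at h

lemma nonneg (x : ℝ) : 0 ≤ p x := by
  have h := tangent_le hp.convexOn (c - 1) x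
  rwa [hp.rightDeriv_eq_zero (by linarith), hp.eq_zero _ (by linarith), zero_mul, add_zero] at h

lemma lipschitz (x y : ℝ) : |p x - p y| ≤ s * |x - y| := by
  have hlo : min c (min x y) - 1 < c := by linarith [min_le_left c (min x y)]
  have hhi : d < max d (max x y) + 1 := by linarith [le_max_left d (max x y)]
  refine abs_sub_le_of_rightDeriv_bounds hp.convexOn (a := min c (min x y) - 1)
    (b := max d (max x y) + 1) ?_ (hp.rightDeriv_eq_slope hhi).le x ⟨?_, ?_⟩ y ⟨?_, ?_⟩
  · rw [hp.rightDeriv_eq_zero hlo]; exact neg_nonpos.mpr hp.slope_nonneg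
  · linarith [(min_le_right c (min x y)).trans (min_le_left x y)]
  · linarith [(le_max_left x y).trans (le_max_right d (max x y))]
  · linarith [(min_le_right c (min x y)).trans (min_le_right x y)]
  · linarith [(le_max_right x y).trans (le_max_right d (max x y))]

lemma le_mul_max (x : ℝ) : p x ≤ s * max (x - c) 0 := by
  rcases le_total x c with hx | hx
  · rw [hp.eq_zero x hx]
    exact mul_nonneg hp.slope_nonneg (le_max_right _ _)
  · have h := (abs_le.mp (hp.lipschitz x c)).2
    rwa [hp.eq_zero c le_rfl, sub_zero, abs_of_nonneg (sub_nonneg.mpr hx),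
      ← max_eq_left (sub_nonneg.mpr hx)] at h

lemma mul_max_le (x : ℝ) : s * max (x - d) 0 ≤ p x := by
  rcases le_total x d with hx | hx
  · rw [max_eq_right (sub_nonpos.mpr hx), mul_zero]
    exact hp.nonneg x
  · rw [max_eq_left (sub_nonneg.mpr hx), hp.eq_affine x hx]
    exact le_add_of_nonneg_left (hp.nonneg d)

lemma abs_sub_le (hq : IsRamp q c d s) (x : ℝ) : |p x - q x| ≤ (d - c) * s := by
  have hmax : max (x - c) 0 ≤ max (x - d) 0 + (d - c) :=
    max_le (by linarith [le_max_left (x - d) 0]) (by linarith [le_max_right (x - d) 0, hp.le])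
  have hwidth : s * max (x - c) 0 ≤ s * max (x - d) 0 + (d - c) * s := by
    nlinarith [mul_le_mul_of_nonneg_left hmax hp.slope_nonneg]
  rw [abs_sub_le_iff]
  constructor <;>
    linarith [hp.le_mul_max x, hp.mul_max_le x, hq.le_mul_max x, hq.mul_max_le x]

lemma comp_sub (y : ℝ) : IsRamp (fun x => p (x - y)) (c + y) (d + y) s where
  le := add_le_add_left hp.le y
  convexOn := convexOn_comp_sub hp.convexOn y
  eq_zero x hx := hp.eq_zero _ (by linarith)
  eq_affine x hx := by
    rw [hp.eq_affine (x - y) (by linarith), add_sub_cancel_right, sub_sub, add_comm y d]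

end IsRamp

/-- The function agreeing with `f` to the left of `y` and with the right tangent of `f` at `y` to
the right of `y`. -/
def rightTangentExt (f : ℝ → ℝ) (y x : ℝ) : ℝ := f (min x y) + rightDeriv f y * (x - min x y)

lemma rightTangentExt_of_le {f : ℝ → ℝ} {x y : ℝ} (h : x ≤ y) : rightTangentExt f y x = f x := by
  rw [rightTangentExt, min_eq_left h, sub_self, mul_zero, add_zero]

lemma rightTangentExt_of_ge {f : ℝ → ℝ} {x y : ℝ} (h : y ≤ x) :
    rightTangentExt f y x = f y + rightDeriv f y * (x - y) := by
  rw [rightTangentExt, min_eq_right h]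

/-- The part of `f` living on `[c, d]`: the ramp on `[c, d]` that differs there from `f` by the
right tangent of `f` at `c`. -/
def ramp (f : ℝ → ℝ) (c d x : ℝ) : ℝ := rightTangentExt f d x - rightTangentExt f c x

lemma ramp_of_mem {f : ℝ → ℝ} {c d x : ℝ} (hx : x ∈ Set.Icc c d) :
    ramp f c d x = f x - (f c + rightDeriv f c * (x - c)) := by
  rw [ramp, rightTangentExt_of_le hx.2, rightTangentExt_of_ge hx.1]

lemma ramp_eq_clamp (f : ℝ → ℝ) {c d : ℝ} (hcd : c ≤ d) (x : ℝ) :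
    ramp f c d x = f (clamp c d x) + rightDeriv f (clamp c d x) * (x - clamp c d x) -
      (f c + rightDeriv f c * (x - c)) := by
  rcases le_total x c with hx | hx
  · rw [clamp_of_le hcd hx, ramp, rightTangentExt_of_le hx, rightTangentExt_of_le (hx.trans hcd),
      sub_self, sub_self]
  rcases le_total x d with hx' | hx'
  · rw [clamp_of_mem ⟨hx, hx'⟩, ramp_of_mem ⟨hx, hx'⟩, sub_self, mul_zero, add_zero]
  · rw [clamp_of_ge hcd hx', ramp, rightTangentExt_of_ge hx, rightTangentExt_of_ge hx']

lemma mul_sub_clamp_le {m : ℝ → ℝ} (hm : Monotone m) {c d : ℝ} (hcd : c ≤ d) (x y : ℝ) :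
    m (clamp c d x) * (y - clamp c d y) ≤ m (clamp c d y) * (y - clamp c d y) := by
  have hx := clamp_mem_Icc hcd x
  rcases le_total y c with hy | hy
  · rw [clamp_of_le hcd hy]
    exact mul_le_mul_of_nonpos_right (hm hx.1) (sub_nonpos.mpr hy)
  rcases le_total y d with hy' | hy'
  · rw [clamp_of_mem ⟨hy, hy'⟩, sub_self, mul_zero, mul_zero]
  · rw [clamp_of_ge hcd hy']
    exact mul_le_mul_of_nonneg_right (hm hx.2) (sub_nonneg.mpr hy')

lemma convexOn_ramp {f : ℝ → ℝ} (hf : ConvexOn ℝ Set.univ f) {c d : ℝ} (hcd : c ≤ d) :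
    ConvexOn ℝ Set.univ (ramp f c d) := by
  refine convexOn_of_subgradient (fun x => rightDeriv f (clamp c d x) - rightDeriv f c)
    fun x y => ?_
  rw [ramp_eq_clamp f hcd x, ramp_eq_clamp f hcd y]
  linarith [tangent_le hf (clamp c d x) (clamp c d y),
    mul_sub_clamp_le (monotone_rightDeriv hf) hcd x y]

lemma isRamp_ramp {f : ℝ → ℝ} (hf : ConvexOn ℝ Set.univ f) {c d : ℝ} (hcd : c ≤ d) :
    IsRamp (ramp f c d) c d (rightDeriv f d - rightDeriv f c) where
  le := hcd
  convexOn := convexOn_ramp hf hcd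
  eq_zero x hx := by
    rw [ramp, rightTangentExt_of_le hx, rightTangentExt_of_le (hx.trans hcd), sub_self]
  eq_affine x hx := by
    rw [ramp_eq_clamp f hcd x, ramp_eq_clamp f hcd d, clamp_of_ge hcd hx, clamp_of_ge hcd le_rfl]
    ring

/-- `p` lists ramps on the cells `[x i, x (i + 1)]` of a partition that have the same slopes as
the ramps of `f`. -/
def IsRampFamily (f : ℝ → ℝ) (p : ℕ → ℝ → ℝ) (x : ℕ → ℝ) : Prop :=
  ∀ i, IsRamp (p i) (x i) (x (i + 1)) (rightDeriv f (x (i + 1)) - rightDeriv f (x i))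

/-- The convex function on `[x 0, x N]` obtained from `f` by replacing its ramps on the first `N`
cells by those of the family `p`. -/
def rampSum (f : ℝ → ℝ) (p : ℕ → ℝ → ℝ) (x : ℕ → ℝ) (N : ℕ) (y : ℝ) : ℝ :=
  ∑ i ∈ Finset.range N, p i y + (f (x 0) + rightDeriv f (x 0) * (y - x 0))

namespace IsRampFamily

variable {f : ℝ → ℝ} {p : ℕ → ℝ → ℝ} {x : ℕ → ℝ} (hp : IsRampFamily f p x)
include hp

lemma monotone : Monotone x := monotone_nat_of_le_succ fun i => (hp i).le

lemma convexOn_rampSum (N : ℕ) : ConvexOn ℝ Set.univ (rampSum f p x N) := by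
  have hsum : ConvexOn ℝ Set.univ fun y => ∑ i ∈ Finset.range N, p i y := by
    induction N with
    | zero => simpa only [Finset.range_zero, Finset.sum_empty] using convexOn_const 0 convex_univ
    | succ N ih => exact (ih.add (hp N).convexOn).congr fun y _ => (Finset.sum_range_succ _ N).symm
  refine (convexOn_add_affine hsum (rightDeriv f (x 0))
    (f (x 0) - rightDeriv f (x 0) * x 0)).congr fun y _ => ?_
  simp only [rampSum]
  ring

lemma lipschitz_rampSum (N : ℕ) (y z : ℝ) :
    |rampSum f p x N y - rampSum f p x N z| ≤
      (rightDeriv f (x N) - rightDeriv f (x 0) + |rightDeriv f (x 0)|) * |y - z| := by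
  calc |rampSum f p x N y - rampSum f p x N z|
      = |∑ i ∈ Finset.range N, (p i y - p i z) + rightDeriv f (x 0) * (y - z)| := by
        rw [Finset.sum_sub_distrib]; simp only [rampSum]; ring_nf
    _ ≤ ∑ i ∈ Finset.range N, |p i y - p i z| + |rightDeriv f (x 0)| * |y - z| := by
        rw [← abs_mul]
        exact (abs_add_le _ _).trans (add_le_add_left (Finset.abs_sum_le_sum_abs _ _) _)
    _ ≤ ∑ i ∈ Finset.range N, (rightDeriv f (x (i + 1)) - rightDeriv f (x i)) * |y - z| +
          |rightDeriv f (x 0)| * |y - z| := by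
        gcongr with i
        exact (hp i).lipschitz y z
    _ = _ := by
        rw [← Finset.sum_mul, Finset.sum_range_sub fun i => rightDeriv f (x i)]; ring

lemma abs_rampSum_sub_le (hf : ConvexOn ℝ Set.univ f) {h : ℝ} (hh : ∀ i, x (i + 1) - x i ≤ h)
    {N : ℕ} {y : ℝ} (hy : y ∈ Set.Icc (x 0) (x N)) :
    |rampSum f p x N y - f y| ≤ h * (rightDeriv f (x N) - rightDeriv f (x 0)) := by
  have hf_sum : f y = ∑ i ∈ Finset.range N, ramp f (x i) (x (i + 1)) y +
      (f (x 0) + rightDeriv f (x 0) * (y - x 0)) := by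
    simp only [ramp]
    rw [Finset.sum_range_sub fun i => rightTangentExt f (x i) y, rightTangentExt_of_le hy.2,
      rightTangentExt_of_ge hy.1, sub_add_cancel]
  calc |rampSum f p x N y - f y|
      = |∑ i ∈ Finset.range N, (p i y - ramp f (x i) (x (i + 1)) y)| := by
        rw [hf_sum, rampSum, add_sub_add_right_eq_sub, Finset.sum_sub_distrib]
    _ ≤ ∑ i ∈ Finset.range N, |p i y - ramp f (x i) (x (i + 1)) y| :=
        Finset.abs_sum_le_sum_abs _ _
    _ ≤ ∑ i ∈ Finset.range N, h * (rightDeriv f (x (i + 1)) - rightDeriv f (x i)) :=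
        Finset.sum_le_sum fun i _ => ((hp i).abs_sub_le (isRamp_ramp hf (hp i).le) y).trans
          (mul_le_mul_of_nonneg_right (hh i) (hp i).slope_nonneg)
    _ = h * (rightDeriv f (x N) - rightDeriv f (x 0)) := by
        rw [← Finset.mul_sum, Finset.sum_range_sub fun i => rightDeriv f (x i)]

/-- To the right of its cell a ramp is affine and to the left of it it vanishes, so on a fixed
cell the other ramps only contribute an affine function. -/
lemma exists_rampSum_eq_add_affine {N j : ℕ} (hj : j < N) :
    ∃ m c : ℝ, ∀ y ∈ Set.Icc (x j) (x (j + 1)), rampSum f p x N y = p j y + (m * y + c) := by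
  set s : ℕ → ℝ := fun i => rightDeriv f (x (i + 1)) - rightDeriv f (x i) with hs
  refine ⟨∑ i ∈ Finset.range j, s i + rightDeriv f (x 0), ∑ i ∈ Finset.range j,
    (p i (x (i + 1)) - s i * x (i + 1)) + (f (x 0) - rightDeriv f (x 0) * x 0), fun y hy => ?_⟩
  have hleft : ∑ i ∈ Finset.range j, p i y = (∑ i ∈ Finset.range j, s i) * y +
      ∑ i ∈ Finset.range j, (p i (x (i + 1)) - s i * x (i + 1)) := by
    rw [Finset.sum_mul, ← Finset.sum_add_distrib]
    refine Finset.sum_congr rfl fun i hi => ?_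
    rw [(hp i).eq_affine y ((hp.monotone (Finset.mem_range.mp hi)).trans hy.1)]
    simp only [hs]
    ring
  have hright : ∑ i ∈ Finset.Ico (j + 1) N, p i y = 0 :=
    Finset.sum_eq_zero fun i hi =>
      (hp i).eq_zero y (hy.2.trans (hp.monotone (Finset.mem_Ico.mp hi).1))
  rw [rampSum, ← Finset.sum_range_add_sum_Ico _ hj, Finset.sum_range_succ, hleft, hright]
  ring

end IsRampFamily

/-! ### Simple valuations on a partition -/

lemma min_onIcc_adjacent (f : ℝ → ℝ) {a b c : ℝ} (hab : a ≤ b) (hbc : b ≤ c) :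
    (fun x => min (onIcc f a b x) (onIcc f b c x)) = onIcc f a c := by
  ext1 x
  by_cases h1 : x ∈ Set.Icc a b <;> by_cases h2 : x ∈ Set.Icc b c
  · rw [onIcc_of_mem h1, onIcc_of_mem h2, onIcc_of_mem ⟨h1.1, h2.2⟩, min_self]
  · rw [onIcc_of_mem h1, onIcc_of_notMem h2, onIcc_of_mem ⟨h1.1, h1.2.trans hbc⟩, min_top_right]
  · rw [onIcc_of_notMem h1, onIcc_of_mem h2, onIcc_of_mem ⟨hab.trans h2.1, h2.2⟩, min_top_left]
  · have h : x ∉ Set.Icc a c := by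
      rw [← Set.Icc_union_Icc_eq_Icc hab hbc]
      exact fun hx => hx.elim h1 h2
    rw [onIcc_of_notMem h1, onIcc_of_notMem h2, onIcc_of_notMem h, min_self]

lemma max_onIcc (f g : ℝ → ℝ) (a b c d : ℝ) :
    (fun x => max (onIcc f a b x) (onIcc g c d x)) =
      onIcc (fun x => max (f x) (g x)) (max a c) (min b d) := by
  ext1 x
  have hmem : x ∈ Set.Icc (max a c) (min b d) ↔ x ∈ Set.Icc a b ∧ x ∈ Set.Icc c d := by
    rw [← Set.mem_inter_iff, Set.Icc_inter_Icc]
  by_cases h1 : x ∈ Set.Icc a b <;> by_cases h2 : x ∈ Set.Icc c d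
  · rw [onIcc_of_mem h1, onIcc_of_mem h2, onIcc_of_mem (hmem.mpr ⟨h1, h2⟩),
      EReal.coe_strictMono.monotone.map_max]
  · rw [onIcc_of_notMem h2, onIcc_of_notMem fun h => h2 (hmem.mp h).2, max_top_right]
  · rw [onIcc_of_notMem h1, onIcc_of_notMem fun h => h1 (hmem.mp h).1, max_top_left]
  · rw [onIcc_of_notMem h1, onIcc_of_notMem fun h => h1 (hmem.mp h).1, max_top_left]

section SimpleValuation

variable {Z : (ℝ → EReal) → ℝ} {f : ℝ → ℝ} (hval : IsVal Z)
  (hsimple : ∀ u : ℝ → EReal, IsLC u → (∃ x : ℝ, edom u = {x}) → Z u = 0)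
  (hf : ConvexOn ℝ Set.univ f)
include hval hsimple hf

lemma map_onIcc_adjacent {a b c : ℝ} (hab : a ≤ b) (hbc : b ≤ c) :
    Z (onIcc f a c) = Z (onIcc f a b) + Z (onIcc f b c) := by
  have h := hval (onIcc f a b) (onIcc f b c) (isLC_onIcc hf hab) (isLC_onIcc hf hbc)
    (by rw [min_onIcc_adjacent f hab hbc]; exact isLC_onIcc hf (hab.trans hbc))
  have hpoint : Z (onIcc f b b) = 0 :=
    hsimple _ (isLC_onIcc hf le_rfl) ⟨b, by rw [edom_onIcc, Set.Icc_self]⟩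
  simp only [min_onIcc_adjacent f hab hbc, max_onIcc, max_self, max_eq_right hab, min_eq_left hbc,
    hpoint, add_zero] at h
  exact h

lemma map_onIcc_partition {x : ℕ → ℝ} (hx : Monotone x) (N : ℕ) :
    Z (onIcc f (x 0) (x N)) = ∑ i ∈ Finset.range N, Z (onIcc f (x i) (x (i + 1))) := by
  induction N with
  | zero =>
    rw [Finset.sum_range_zero]
    exact hsimple _ (isLC_onIcc hf le_rfl) ⟨x 0, by rw [edom_onIcc, Set.Icc_self]⟩
  | succ N ih =>
    rw [Finset.sum_range_succ, ← ih]
    exact map_onIcc_adjacent hval hsimple hf (hx N.zero_le) (hx N.le_succ)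

end SimpleValuation

/-! ### Values of the functional on ramps -/

lemma hasDerivAt_quadratic (a x : ℝ) : HasDerivAt (fun t => a * (t ^ 2 / 2)) (a * x) x := by
  refine (((hasDerivAt_id x).pow 2).div_const 2 |>.const_mul a).congr_deriv ?_
  simp only [id_eq, Nat.cast_ofNat]
  ring

lemma rightDeriv_quadratic (a x : ℝ) : rightDeriv (fun t => a * (t ^ 2 / 2)) x = a * x :=
  rightDeriv_eq_of_hasDerivAt (hasDerivAt_quadratic a x)

lemma convexOn_quadratic {a : ℝ} (ha : 0 ≤ a) : ConvexOn ℝ Set.univ fun t => a * (t ^ 2 / 2) :=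
  convexOn_of_subgradient (fun x => a * x) fun x y => by
    nlinarith [mul_nonneg ha (sq_nonneg (y - x))]

namespace GoodVal

variable {ζ : ℝ → ℝ} {Z : (ℝ → EReal) → ℝ} (hZ : GoodVal ζ Z) {f : ℝ → ℝ} {a b : ℝ}
include hZ

lemma tauUSC : TauUSC Z := hZ.1

lemma isVal : IsVal Z := hZ.2.1

lemma simple : ∀ u : ℝ → EReal, IsLC u → (∃ x : ℝ, edom u = {x}) → Z u = 0 := hZ.2.2.2.2.1

lemma map_onIcc_self (hf : ConvexOn ℝ Set.univ f) (a : ℝ) : Z (onIcc f a a) = 0 :=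
  hZ.simple _ (isLC_onIcc hf le_rfl) ⟨a, by rw [edom_onIcc, Set.Icc_self]⟩

lemma map_onIcc_add_affine (hf : ConvexOn ℝ Set.univ f) (hab : a ≤ b) (m c : ℝ) :
    Z (onIcc (fun x => f x + (m * x + c)) a b) = Z (onIcc f a b) := by
  rw [← onIcc_add f]
  exact hZ.2.2.2.1 _ (isLC_onIcc hf hab) (LinearMap.mul ℝ ℝ m) c

lemma map_onIcc_comp_sub (hf : ConvexOn ℝ Set.univ f) (hab : a ≤ b) (y : ℝ) :
    Z (onIcc (fun x => f (x - y)) (a + y) (b + y)) = Z (onIcc f a b) := by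
  rw [← onIcc_sub]
  exact hZ.2.2.1 _ (isLC_onIcc hf hab) y

lemma map_onIcc_zero (hab : a ≤ b) : Z (onIcc 0 a b) = 0 := by
  rw [onIcc_zero_eq_eIndicator]
  exact hZ.2.2.2.2.2.1 a b hab

lemma map_onIcc_quadratic_of_pos {σ : ℝ} (hσ : 0 < σ) (hab : a < b) :
    Z (onIcc (fun t => σ * (t ^ 2 / 2)) a b) = (b - a) * ζ σ := by
  set m := (a + b) / 2 with hm
  set h := (b - a) / 2 with hh
  have hh_pos : 0 < h := by linarith
  have hcentred : Z (onIcc (fun t => σ * (t ^ 2 / 2)) (-h) h) = 2 * h * ζ σ :=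
    hZ.2.2.2.2.2.2 σ h hσ hh_pos
  rw [← hZ.map_onIcc_comp_sub (convexOn_quadratic hσ.le) (by linarith) m,
    show -h + m = a by rw [hh, hm]; ring, show h + m = b by rw [hh, hm]; ring] at hcentred
  rw [← hZ.map_onIcc_add_affine (convexOn_quadratic hσ.le) hab.le (-σ * m) (σ * (m ^ 2 / 2)),
    show b - a = 2 * h by rw [hh]; ring, ← hcentred]
  exact congrArg Z (onIcc_congr fun t _ => by ring)

lemma map_onIcc_quadratic (hζ : IsConc ζ) {σ : ℝ} (hσ : 0 ≤ σ) (hab : a ≤ b) :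
    Z (onIcc (fun t => σ * (t ^ 2 / 2)) a b) = (b - a) * ζ σ := by
  rcases hab.eq_or_lt with rfl | hab'
  · rw [hZ.map_onIcc_self (convexOn_quadratic hσ), sub_self, zero_mul]
  rcases hσ.eq_or_lt with rfl | hσ'
  · rw [hζ.map_zero, mul_zero]
    refine (congrArg Z (onIcc_congr fun t _ => ?_)).trans (hZ.map_onIcc_zero hab)
    rw [zero_mul, Pi.zero_apply]
  · exact hZ.map_onIcc_quadratic_of_pos hσ' hab'

lemma map_onIcc_ramp (hf : ConvexOn ℝ Set.univ f) (hab : a ≤ b) :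
    Z (onIcc (ramp f a b) a b) = Z (onIcc f a b) := by
  rw [← hZ.map_onIcc_add_affine hf hab (-rightDeriv f a) (rightDeriv f a * a - f a)]
  exact congrArg Z (onIcc_congr fun x hx => by rw [ramp_of_mem hx]; ring)

lemma map_onIcc_rampSum {p : ℕ → ℝ → ℝ} {x : ℕ → ℝ} (hp : IsRampFamily f p x) (N : ℕ) :
    Z (onIcc (rampSum f p x N) (x 0) (x N)) =
      ∑ i ∈ Finset.range N, Z (onIcc (p i) (x i) (x (i + 1))) := by
  rw [map_onIcc_partition hZ.isVal hZ.simple (hp.convexOn_rampSum N) hp.monotone]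
  refine Finset.sum_congr rfl fun i hi => ?_
  obtain ⟨m, c, hmc⟩ := hp.exists_rampSum_eq_add_affine (Finset.mem_range.mp hi)
  rw [onIcc_congr hmc, hZ.map_onIcc_add_affine (hp i).convexOn (hp i).le]

end GoodVal

/-- The upper bound `B` is needed because `limsup` of an unbounded real sequence is a junk
value. -/
lemma TauUSC.le_of_tendsto {Z : (ℝ → EReal) → ℝ} (hZ : TauUSC Z) {uk : ℕ → ℝ → EReal}
    {u : ℝ → EReal} (hu : TauConv uk u) {v : ℕ → ℝ} {c B : ℝ} (hv : Tendsto v atTop (𝓝 c))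
    (hvZ : ∀ᶠ k in atTop, v k ≤ Z (uk k)) (hB : ∀ k, Z (uk k) ≤ B) : c ≤ Z u := by
  refine le_trans ?_ (hZ uk u hu)
  rw [← hv.limsup_eq]
  exact limsup_le_limsup hvZ hv.isCoboundedUnder_le
    ⟨B, eventually_map.mpr (Eventually.of_forall hB)⟩

/-! ### Quadratic splines -/

/-- The nodes of the partition of mesh `l` starting at `a`. -/
def node (a l : ℝ) (i : ℕ) : ℝ := a + i * l

lemma node_zero (a l : ℝ) : node a l 0 = a := by rw [node, Nat.cast_zero, zero_mul, add_zero]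

lemma node_succ (a l : ℝ) (i : ℕ) : node a l (i + 1) = node a l i + l := by
  rw [node, node, Nat.cast_succ]; ring

lemma monotone_node (a : ℝ) {l : ℝ} (hl : 0 ≤ l) : Monotone (node a l) :=
  monotone_nat_of_le_succ fun i => by rw [node_succ]; exact le_add_of_nonneg_right hl

lemma node_div_succ (a b : ℝ) (k : ℕ) : node a ((b - a) / (k + 1)) (k + 1) = b := by
  have hk : (k : ℝ) + 1 ≠ 0 := k.cast_add_one_ne_zero
  rw [node, Nat.cast_succ, mul_div_cancel₀ _ hk, add_sub_cancel]

lemma tendsto_div_add_one (c : ℝ) : Tendsto (fun k : ℕ => c / ((k : ℝ) + 1)) atTop (𝓝 0) :=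
  tendsto_const_nhds.div_atTop (tendsto_natCast_atTop_atTop.atTop_add tendsto_const_nhds)

/-- The mean second derivative of `f` over the cell `i` of the partition of mesh `l` starting at
`a`. -/
def cellCurvature (f : ℝ → ℝ) (a l : ℝ) (i : ℕ) : ℝ :=
  (rightDeriv f (node a l (i + 1)) - rightDeriv f (node a l i)) / l

/-- The Riemann sum of `∫ ζ (f'')` over the first `N` cells of the partition of mesh `l` starting
at `a`. -/
def curvatureSum (ζ f : ℝ → ℝ) (a l : ℝ) (N : ℕ) : ℝ :=
  ∑ i ∈ Finset.range N, l * ζ (cellCurvature f a l i)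

/-- The ramps of the quadratic spline whose derivative interpolates that of `f` at the nodes. -/
def splineRamp (f : ℝ → ℝ) (a l : ℝ) (i : ℕ) : ℝ → ℝ :=
  ramp (fun t => cellCurvature f a l i * (t ^ 2 / 2)) (node a l i) (node a l (i + 1))

section Spline

variable {f : ℝ → ℝ} (hf : ConvexOn ℝ Set.univ f) {l : ℝ} (hl : 0 < l) (a : ℝ)
include hf hl

lemma cellCurvature_nonneg (i : ℕ) : 0 ≤ cellCurvature f a l i :=
  div_nonneg (sub_nonneg.mpr (monotone_rightDeriv hf (monotone_node a hl.le i.le_succ))) hl.le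

lemma isRampFamily_splineRamp : IsRampFamily f (splineRamp f a l) (node a l) := by
  intro i
  have h := isRamp_ramp (convexOn_quadratic (cellCurvature_nonneg hf hl a i))
    (monotone_node a hl.le i.le_succ)
  have hslope : cellCurvature f a l i * node a l (i + 1) - cellCurvature f a l i * node a l i =
      rightDeriv f (node a l (i + 1)) - rightDeriv f (node a l i) := by
    rw [← mul_sub, node_succ, add_sub_cancel_left, ← node_succ, cellCurvature,
      div_mul_cancel₀ _ hl.ne']
  rwa [rightDeriv_quadratic, rightDeriv_quadratic, hslope] at h

lemma curvatureSum_nonneg {ζ : ℝ → ℝ} (hζ : IsConc ζ) (N : ℕ) : 0 ≤ curvatureSum ζ f a l N :=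
  Finset.sum_nonneg fun i _ => mul_nonneg hl.le (hζ.1 _ (cellCurvature_nonneg hf hl a i))

lemma curvatureSum_le {ζ : ℝ → ℝ} (hζ : IsConc ζ) {N : ℕ} (hN : N ≠ 0) :
    curvatureSum ζ f a l N ≤
      N * l * ζ ((rightDeriv f (node a l N) - rightDeriv f a) / (N * l)) := by
  have h := sum_mul_map_div_le_of_concaveOn hζ.2.1 (Finset.nonempty_range_iff.mpr hN)
    (w := fun _ => l) (s := fun i => rightDeriv f (node a l (i + 1)) - rightDeriv f (node a l i))
    (fun _ _ => hl)
    (fun i _ => sub_nonneg.mpr (monotone_rightDeriv hf (monotone_node a hl.le i.le_succ)))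
  rwa [Finset.sum_const, Finset.card_range, nsmul_eq_mul,
    Finset.sum_range_sub fun i => rightDeriv f (node a l i), node_zero] at h

lemma GoodVal.map_onIcc_rampSum_splineRamp {ζ : ℝ → ℝ} {Z : (ℝ → EReal) → ℝ} (hZ : GoodVal ζ Z)
    (hζ : IsConc ζ) (N : ℕ) :
    Z (onIcc (rampSum f (splineRamp f a l) (node a l) N) a (node a l N)) =
      curvatureSum ζ f a l N := by
  have h := hZ.map_onIcc_rampSum (isRampFamily_splineRamp hf hl a) N
  rw [node_zero] at h
  refine h.trans (Finset.sum_congr rfl fun i _ => ?_)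
  have hσ := cellCurvature_nonneg hf hl a i
  have hmono := monotone_node a hl.le i.le_succ
  rw [splineRamp, hZ.map_onIcc_ramp (convexOn_quadratic hσ) hmono,
    hZ.map_onIcc_quadratic hζ hσ hmono, node_succ, add_sub_cancel_left]

end Spline

lemma tauConv_rampSum {f : ℝ → ℝ} (hf : ConvexOn ℝ Set.univ f) {p : ℕ → ℕ → ℝ → ℝ}
    {x : ℕ → ℕ → ℝ} (hp : ∀ k, IsRampFamily f (p k) (x k)) {h : ℕ → ℝ}
    (hmesh : ∀ k i, x k (i + 1) - x k i ≤ h k) (hh : Tendsto h atTop (𝓝 0)) {N : ℕ → ℕ} {a b : ℝ}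
    (ha : ∀ k, x k 0 = a) (hb : ∀ k, x k (N k) = b) :
    TauConv (fun k => onIcc (rampSum f (p k) (x k) (N k)) a b) (onIcc f a b) := by
  have hab : a ≤ b := by rw [← ha 0, ← hb 0]; exact (hp 0).monotone (N 0).zero_le
  set L := rightDeriv f b - rightDeriv f a + |rightDeriv f a| with hL
  have hL0 : 0 ≤ L :=
    add_nonneg (sub_nonneg.mpr (monotone_rightDeriv hf hab)) (abs_nonneg _)
  have herr : Tendsto (fun k => h k * (rightDeriv f b - rightDeriv f a)) atTop (𝓝 0) := by
    simpa only [zero_mul] using hh.mul_const _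
  refine tauConv_onIcc (M := L + 1) (fun k => (hp k).convexOn_rampSum _) hf (fun _ => hab) hab
    tendsto_const_nhds tendsto_const_nhds herr (fun k y hy => ?_) (by linarith)
    fun k y _ z _ => ?_
  · have hy' : y ∈ Set.Icc (x k 0) (x k (N k)) := by rwa [ha, hb]
    simpa only [ha, hb] using (hp k).abs_rampSum_sub_le hf (hmesh k) hy'
  · have hlip := (hp k).lipschitz_rampSum (N k) y z
    rw [ha, hb, ← hL] at hlip
    exact hlip.trans (mul_le_mul_of_nonneg_right (by linarith) (abs_nonneg _))

namespace GoodVal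

variable {ζ : ℝ → ℝ} {Z : (ℝ → EReal) → ℝ} (hZ : GoodVal ζ Z) (hζ : IsConc ζ) {f : ℝ → ℝ}
  (hf : ConvexOn ℝ Set.univ f) {a b c : ℝ}
include hZ hζ hf

lemma le_map_onIcc_of_le_curvatureSum (hab : a < b)
    (h : ∀ᶠ k : ℕ in atTop, c ≤ curvatureSum ζ f a ((b - a) / (k + 1)) (k + 1)) :
    c ≤ Z (onIcc f a b) := by
  have hl : ∀ k : ℕ, 0 < (b - a) / ((k : ℝ) + 1) := fun k =>
    div_pos (sub_pos.mpr hab) k.cast_add_one_pos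
  have hvalue : ∀ k : ℕ, Z (onIcc (rampSum f (splineRamp f a ((b - a) / (k + 1)))
      (node a ((b - a) / (k + 1))) (k + 1)) a b) =
        curvatureSum ζ f a ((b - a) / (k + 1)) (k + 1) := fun k => by
    simpa only [node_div_succ] using hZ.map_onIcc_rampSum_splineRamp hf (hl k) a hζ (k + 1)
  have hconv := tauConv_rampSum hf (N := fun k => k + 1)
    (fun k => isRampFamily_splineRamp hf (hl k) a)
    (fun k i => by rw [node_succ, add_sub_cancel_left]) (tendsto_div_add_one (b - a))
    (fun k => node_zero a _) (node_div_succ a b)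
  refine hZ.tauUSC.le_of_tendsto hconv tendsto_const_nhds
    (B := (b - a) * ζ ((rightDeriv f b - rightDeriv f a) / (b - a)))
    (by simpa only [hvalue] using h) fun k => ?_
  have hmul : ((k + 1 : ℕ) : ℝ) * ((b - a) / ((k : ℝ) + 1)) = b - a := by
    rw [Nat.cast_succ, mul_div_cancel₀ _ k.cast_add_one_ne_zero]
  simpa only [hvalue, hmul, node_div_succ] using curvatureSum_le hf (hl k) a hζ k.succ_ne_zero

lemma map_onIcc_nonneg (hab : a ≤ b) : 0 ≤ Z (onIcc f a b) := by
  rcases hab.eq_or_lt with rfl | hab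
  · exact (hZ.map_onIcc_self hf a).ge
  · exact hZ.le_map_onIcc_of_le_curvatureSum hζ hf hab <| Eventually.of_forall fun k =>
      curvatureSum_nonneg hf (div_pos (sub_pos.mpr hab) k.cast_add_one_pos) a hζ _

end GoodVal

/-! ### Side-by-side copies of a ramp -/

/-- The convex function on `[0, n * l]` made of `n` consecutive translates of the ramp `p` on
`[0, l]` of slope `s`. When `l` is small it is close to the parabola of second derivative
`s / l`. -/
def rampCopies (p : ℝ → ℝ) (l s : ℝ) (n : ℕ) : ℝ → ℝ :=
  rampSum (fun t => s / l * (t ^ 2 / 2)) (fun i y => p (y - node 0 l i)) (node 0 l) n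

section RampCopies

variable {p : ℝ → ℝ} {l s : ℝ} (hp : IsRamp p 0 l s) (hl : 0 < l)
include hp hl

lemma isRampFamily_translates :
    IsRampFamily (fun t => s / l * (t ^ 2 / 2)) (fun i y => p (y - node 0 l i)) (node 0 l) := by
  intro i
  have h := hp.comp_sub (node 0 l i)
  rw [rightDeriv_quadratic, rightDeriv_quadratic, ← mul_sub, node_succ, add_sub_cancel_left,
    div_mul_cancel₀ _ hl.ne']
  rwa [zero_add, add_comm l] at h

lemma abs_rampCopies_sub_le (n : ℕ) {y : ℝ} (hy : y ∈ Set.Icc 0 (n * l)) :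
    |rampCopies p l s n y - s / l * (y ^ 2 / 2)| ≤ l * (n * s) := by
  have h := (isRampFamily_translates hp hl).abs_rampSum_sub_le (h := l) (N := n) (y := y)
    (convexOn_quadratic (div_nonneg hp.slope_nonneg hl.le))
    (fun i => by rw [node_succ, add_sub_cancel_left]) (by rwa [node_zero, node, zero_add])
  rwa [rightDeriv_quadratic, rightDeriv_quadratic, node_zero, mul_zero, sub_zero, node, zero_add,
    mul_left_comm (s / l), div_mul_cancel₀ _ hl.ne'] at h

lemma lipschitz_rampCopies (n : ℕ) (y z : ℝ) :
    |rampCopies p l s n y - rampCopies p l s n z| ≤ n * s * |y - z| := by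
  have h := (isRampFamily_translates hp hl).lipschitz_rampSum n y z
  rwa [rightDeriv_quadratic, rightDeriv_quadratic, node_zero, mul_zero, sub_zero, abs_zero,
    add_zero, node, zero_add, mul_left_comm (s / l), div_mul_cancel₀ _ hl.ne'] at h

lemma GoodVal.map_onIcc_rampCopies {ζ : ℝ → ℝ} {Z : (ℝ → EReal) → ℝ} (hZ : GoodVal ζ Z) (n : ℕ) :
    Z (onIcc (rampCopies p l s n) 0 (n * l)) = n * Z (onIcc p 0 l) := by
  have h := hZ.map_onIcc_rampSum (isRampFamily_translates hp hl) n
  have hcopy : ∀ i, Z (onIcc (fun y => p (y - node 0 l i)) (node 0 l i) (node 0 l (i + 1))) =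
      Z (onIcc p 0 l) := fun i => by
    have htrans := hZ.map_onIcc_comp_sub hp.convexOn hl.le (node 0 l i)
    rwa [zero_add, add_comm l, ← node_succ] at htrans
  simp only [hcopy, Finset.sum_const, Finset.card_range, nsmul_eq_mul] at h
  rwa [node_zero, node, zero_add] at h

end RampCopies

section LimitOfCopies

variable {p : ℕ → ℝ → ℝ} {l s : ℕ → ℝ} {n : ℕ → ℕ} {L S : ℝ}
  (hp : ∀ k, IsRamp (p k) 0 (l k) (s k)) (hl : ∀ k, 0 < l k) (hl0 : Tendsto l atTop (𝓝 0))
  (hL : Tendsto (fun k => n k * l k) atTop (𝓝 L)) (hS : Tendsto (fun k => n k * s k) atTop (𝓝 S))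
include hp hl hl0 hL hS

/-- For `L = 0` the limit is a point, where the junk value `S / 0 = 0` is harmless. -/
lemma tauConv_rampCopies :
    TauConv (fun k => onIcc (rampCopies (p k) (l k) (s k) (n k)) 0 (n k * l k))
      (onIcc (fun t => S / L * (t ^ 2 / 2)) 0 L) := by
  have hnl : ∀ k, 0 ≤ n k * l k := fun k => mul_nonneg (n k).cast_nonneg (hl k).le
  have hL0 : 0 ≤ L := ge_of_tendsto' hL hnl
  have hS0 : 0 ≤ S :=
    ge_of_tendsto' hS fun k => mul_nonneg (n k).cast_nonneg (hp k).slope_nonneg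
  obtain ⟨M, hM⟩ := hS.bddAbove_range
  have herr : Tendsto (fun k => l k * (n k * s k) +
      |n k * s k * (n k * l k) - S / L * (n k * l k) ^ 2| / 2) atTop (𝓝 0) := by
    have hLS : S * L - S / L * L ^ 2 = 0 := by
      rcases eq_or_ne L 0 with rfl | hL1
      · simp only [mul_zero, div_zero, zero_mul, sub_zero]
      · rw [sq, ← mul_assoc, div_mul_cancel₀ _ hL1, sub_self]
    have h := (hl0.mul hS).add ((((hS.mul hL).sub ((hL.pow 2).const_mul (S / L))).abs).div_const 2)
    rwa [hLS, abs_zero, zero_div, zero_mul, add_zero] at h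
  refine tauConv_onIcc (M := max M 1)
    (fun k => (isRampFamily_translates (hp k) (hl k)).convexOn_rampSum _)
    (convexOn_quadratic (div_nonneg hS0 hL0)) hnl hL0 tendsto_const_nhds hL herr
    (fun k y hy => ?_) (lt_max_of_lt_right one_pos) fun k y _ z _ => ?_
  · have hparabola : |s k / l k * (y ^ 2 / 2) - S / L * (y ^ 2 / 2)| ≤
        |n k * s k * (n k * l k) - S / L * (n k * l k) ^ 2| / 2 := by
      have hrw : n k * s k * (n k * l k) = s k / l k * (n k * l k) ^ 2 := by
        field_simp [(hl k).ne']
      rw [hrw, ← sub_mul, ← sub_mul, abs_mul, abs_mul, mul_div_assoc,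
        abs_of_nonneg (by positivity : 0 ≤ y ^ 2 / 2), abs_of_nonneg (sq_nonneg (n k * l k))]
      have hsq : y ^ 2 ≤ (n k * l k) ^ 2 := pow_le_pow_left₀ hy.1 hy.2 2
      gcongr
    exact (abs_sub_le _ _ _).trans
      (add_le_add (abs_rampCopies_sub_le (hp k) (hl k) (n k) hy) hparabola)
  · exact (lipschitz_rampCopies (hp k) (hl k) (n k) y z).trans <| mul_le_mul_of_nonneg_right
      ((hM (Set.mem_range_self k)).trans (le_max_left _ _)) (abs_nonneg _)

lemma GoodVal.le_of_tendsto_rampCopies {ζ : ℝ → ℝ} {Z : (ℝ → EReal) → ℝ} (hZ : GoodVal ζ Z)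
    (hζ : IsConc ζ) {v : ℕ → ℝ} {c B : ℝ} (hv : Tendsto v atTop (𝓝 c))
    (hvZ : ∀ k, v k ≤ n k * Z (onIcc (p k) 0 (l k)))
    (hB : ∀ k, n k * Z (onIcc (p k) 0 (l k)) ≤ B) : c ≤ L * ζ (S / L) := by
  have hL0 : 0 ≤ L := ge_of_tendsto' hL fun k => mul_nonneg (n k).cast_nonneg (hl k).le
  have hS0 : 0 ≤ S :=
    ge_of_tendsto' hS fun k => mul_nonneg (n k).cast_nonneg (hp k).slope_nonneg
  have h := hZ.tauUSC.le_of_tendsto (tauConv_rampCopies hp hl hl0 hL hS) hv (B := B)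
    (Eventually.of_forall fun k => by rw [hZ.map_onIcc_rampCopies (hp k) (hl k)]; exact hvZ k)
    fun k => by rw [hZ.map_onIcc_rampCopies (hp k) (hl k)]; exact hB k
  rwa [hZ.map_onIcc_quadratic hζ (div_nonneg hS0 hL0) hL0, sub_zero] at h

end LimitOfCopies

lemma exists_nat_one_le_mul_le {F B : ℝ} (hF : 0 < F) (hFB : F ≤ B) :
    ∃ n : ℕ, 1 ≤ n * F ∧ n * F ≤ 1 + B := by
  refine ⟨⌈1 / F⌉₊, (div_le_iff₀ hF).mp (Nat.le_ceil _), ?_⟩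
  have h := mul_le_mul_of_nonneg_right (Nat.ceil_lt_add_one (one_div_pos.mpr hF).le).le hF.le
  rw [add_mul, one_div_mul_cancel hF.ne', one_mul] at h
  exact h.trans (by gcongr)

lemma IsConc.exists_nat_scaling {ζ : ℝ → ℝ} (hζ : IsConc ζ) {F B ε l s : ℝ} (hε : 0 < ε)
    (hl : 0 < l) (hs : 0 ≤ s) (hF : l * ζ (s / l) + ε * (l + s) < F) (hFB : F ≤ B) :
    ∃ n : ℕ, 1 ≤ n * F ∧ n * F ≤ 1 + B ∧
      n * l * ζ (n * s / (n * l)) + ε * (n * l + n * s) ≤ n * F ∧ n * l + n * s ≤ (1 + B) / ε := by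
  have hζ0 : 0 ≤ l * ζ (s / l) := mul_nonneg hl.le (hζ.1 _ (div_nonneg hs hl.le))
  have hls : 0 < l + s := by linarith
  have hF0 : 0 < F := (add_pos_of_nonneg_of_pos hζ0 (mul_pos hε hls)).trans hF
  obtain ⟨n, hn1, hnB⟩ := exists_nat_one_le_mul_le hF0 hFB
  have hn : (n : ℝ) ≠ 0 := by rintro h; rw [h, zero_mul] at hn1; linarith
  have hscaled := mul_le_mul_of_nonneg_left hF.le n.cast_nonneg
  refine ⟨n, hn1, hnB, ?_, ?_⟩
  · rw [mul_div_mul_left _ _ hn]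
    linarith
  · rw [le_div_iff₀' hε]
    linarith [mul_nonneg n.cast_nonneg hζ0]

lemma exists_subseq_tendsto_pair {x y : ℕ → ℝ} {C : ℝ} (hx : ∀ k, x k ∈ Set.Icc 0 C)
    (hy : ∀ k, y k ∈ Set.Icc 0 C) :
    ∃ (a b : ℝ) (φ : ℕ → ℕ), StrictMono φ ∧ Tendsto (x ∘ φ) atTop (𝓝 a) ∧
      Tendsto (y ∘ φ) atTop (𝓝 b) := by
  obtain ⟨⟨a, b⟩, -, φ, hφ, hlim⟩ := (isCompact_Icc.prod isCompact_Icc).tendsto_subseq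
    (x := fun k => (x k, y k)) fun k => ⟨hx k, hy k⟩
  exact ⟨a, b, φ, hφ, (continuous_fst.tendsto _).comp hlim, (continuous_snd.tendsto _).comp hlim⟩

namespace GoodVal

variable {ζ : ℝ → ℝ} {Z : (ℝ → EReal) → ℝ} (hZ : GoodVal ζ Z) (hζ : IsConc ζ)
include hZ hζ

/-- Were the ramps to violate the bound, enough copies of them to reach a total value of order `1`
would converge to a parabola (or to a point), violating upper semicontinuity there. -/
lemma not_forall_lt_map_ramp {B ε : ℝ} (hε : 0 < ε) {p : ℕ → ℝ → ℝ} {l s : ℕ → ℝ}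
    (hp : ∀ k, IsRamp (p k) 0 (l k) (s k)) (hl : ∀ k, 0 < l k) (hl0 : Tendsto l atTop (𝓝 0))
    (hB : ∀ k, Z (onIcc (p k) 0 (l k)) ≤ B) :
    ¬ ∀ k, l k * ζ (s k / l k) + ε * (l k + s k) < Z (onIcc (p k) 0 (l k)) := by
  intro hlt
  have hs : ∀ k, 0 ≤ s k := fun k => (hp k).slope_nonneg
  choose n hn1 hnB hv hbound using fun k => hζ.exists_nat_scaling hε (hl k) (hs k) (hlt k) (hB k)
  have hnl : ∀ k, 0 ≤ n k * l k := fun k => mul_nonneg (n k).cast_nonneg (hl k).le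
  have hns : ∀ k, 0 ≤ n k * s k := fun k => mul_nonneg (n k).cast_nonneg (hs k)
  obtain ⟨L, S, φ, hφ, hL, hS⟩ := exists_subseq_tendsto_pair
    (fun k => ⟨hnl k, (le_add_of_nonneg_right (hns k)).trans (hbound k)⟩)
    fun k => ⟨hns k, (le_add_of_nonneg_left (hnl k)).trans (hbound k)⟩
  have hlimit : ∀ {v : ℕ → ℝ} {c : ℝ}, Tendsto v atTop (𝓝 c) →
      (∀ k, v k ≤ n (φ k) * Z (onIcc (p (φ k)) 0 (l (φ k)))) → c ≤ L * ζ (S / L) :=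
    fun hvc hvZ => hZ.le_of_tendsto_rampCopies (fun k => hp (φ k)) (fun k => hl (φ k))
      (hl0.comp hφ.tendsto_atTop) hL hS hζ hvc hvZ fun k => hnB (φ k)
  have hone : 1 ≤ L * ζ (S / L) := hlimit tendsto_const_nhds fun k => hn1 (φ k)
  have hS0 : 0 ≤ S := ge_of_tendsto' hS fun k => hns (φ k)
  have hLpos : 0 < L := (ge_of_tendsto' hL fun k => hnl (φ k)).lt_of_ne fun h => by
    rw [← h, zero_mul] at hone; linarith
  have hζlim : Tendsto (fun k => ζ (n (φ k) * s (φ k) / (n (φ k) * l (φ k)))) atTop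
      (𝓝 (ζ (S / L))) :=
    (hζ.continuousOn _ (div_nonneg hS0 hLpos.le)).tendsto.comp <|
      tendsto_nhdsWithin_iff.mpr ⟨hS.div hL hLpos.ne',
        Eventually.of_forall fun k => div_nonneg (hns (φ k)) (hnl (φ k))⟩
  have hlimit_le := hlimit ((hL.mul hζlim).add ((hL.add hS).const_mul ε)) fun k => hv (φ k)
  nlinarith [mul_pos hε hLpos, mul_nonneg hε.le hS0]

lemma exists_forall_map_ramp_le (B : ℝ) {ε : ℝ} (hε : 0 < ε) :
    ∃ δ > 0, ∀ l, 0 < l → l < δ → ∀ (p : ℝ → ℝ) (s : ℝ), IsRamp p 0 l s →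
      Z (onIcc p 0 l) ≤ B → Z (onIcc p 0 l) ≤ l * ζ (s / l) + ε * (l + s) := by
  by_contra! hcon
  choose l hl hlk p s hp hB hlt using fun k : ℕ => hcon (1 / ((k : ℝ) + 1)) k.one_div_pos_of_nat
  have hl0 : Tendsto l atTop (𝓝 0) :=
    squeeze_zero (fun k => (hl k).le) (fun k => (hlk k).le) (tendsto_div_add_one 1)
  exact hZ.not_forall_lt_map_ramp hζ hε hp hl hl0 hB hlt

end GoodVal

/-! ### Uniqueness -/

namespace GoodVal

variable {ζ : ℝ → ℝ} {Z Z' : (ℝ → EReal) → ℝ} (hZ : GoodVal ζ Z) (hζ : IsConc ζ) {f : ℝ → ℝ}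

include hZ hζ in
lemma exists_forall_map_onIcc_le (B : ℝ) {ε : ℝ} (hε : 0 < ε) :
    ∃ δ > 0, ∀ l, 0 < l → l < δ → ∀ (f : ℝ → ℝ) (c : ℝ), ConvexOn ℝ Set.univ f →
      Z (onIcc f c (c + l)) ≤ B → Z (onIcc f c (c + l)) ≤
        l * ζ ((rightDeriv f (c + l) - rightDeriv f c) / l) +
          ε * (l + (rightDeriv f (c + l) - rightDeriv f c)) := by
  obtain ⟨δ, hδ, h⟩ := hZ.exists_forall_map_ramp_le hζ B hε
  refine ⟨δ, hδ, fun l hl hlδ f c hf hB => ?_⟩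
  have hle : c ≤ c + l := le_add_of_nonneg_right hl.le
  have hp := (isRamp_ramp hf hle).comp_sub (-c)
  have hmap : Z (onIcc (fun x => ramp f c (c + l) (x - -c)) 0 l) = Z (onIcc f c (c + l)) := by
    have htrans := hZ.map_onIcc_comp_sub (convexOn_ramp hf hle) hle (-c)
    rwa [hZ.map_onIcc_ramp hf hle, add_neg_cancel, add_neg_cancel_comm] at htrans
  rw [add_neg_cancel, add_neg_cancel_comm] at hp
  rw [← hmap] at hB ⊢
  exact h l hl hlδ _ _ hp hB

include hZ hζ in
lemma eventually_map_onIcc_le_curvatureSum_add (hf : ConvexOn ℝ Set.univ f) {a b : ℝ}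
    (hab : a < b) {ε : ℝ} (hε : 0 < ε) :
    ∀ᶠ k : ℕ in atTop, Z (onIcc f a b) ≤ curvatureSum ζ f a ((b - a) / (k + 1)) (k + 1) +
      ε * ((b - a) + (rightDeriv f b - rightDeriv f a)) := by
  obtain ⟨δ, hδ, hcell⟩ := hZ.exists_forall_map_onIcc_le hζ (Z (onIcc f a b)) hε
  filter_upwards [(tendsto_div_add_one (b - a)).eventually (gt_mem_nhds hδ)] with k hkδ
  have hk : (0 : ℝ) < k + 1 := k.cast_add_one_pos
  set l := (b - a) / ((k : ℝ) + 1) with hl_def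
  have hl : 0 < l := div_pos (sub_pos.mpr hab) hk
  have hmono := monotone_node a hl.le
  have hlast : node a l (k + 1) = b := node_div_succ a b k
  have hsum := map_onIcc_partition hZ.isVal hZ.simple hf hmono (k + 1)
  rw [node_zero, hlast] at hsum
  have hcell_le : ∀ i ∈ Finset.range (k + 1),
      Z (onIcc f (node a l i) (node a l (i + 1))) ≤ Z (onIcc f a b) := fun i hi => by
    rw [hsum]
    exact Finset.single_le_sum (fun j _ => hZ.map_onIcc_nonneg hζ hf (hmono j.le_succ)) hi
  calc Z (onIcc f a b) = ∑ i ∈ Finset.range (k + 1),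
        Z (onIcc f (node a l i) (node a l (i + 1))) := hsum
    _ ≤ ∑ i ∈ Finset.range (k + 1), (l * ζ (cellCurvature f a l i) +
          ε * (l + (rightDeriv f (node a l (i + 1)) - rightDeriv f (node a l i)))) := by
        refine Finset.sum_le_sum fun i hi => ?_
        have hi_le := hcell_le i hi
        rw [node_succ] at hi_le
        rw [cellCurvature, node_succ]
        exact hcell l hl hkδ f _ hf hi_le
    _ = curvatureSum ζ f a l (k + 1) + ε * ((b - a) + (rightDeriv f b - rightDeriv f a)) := by
        rw [Finset.sum_add_distrib, ← Finset.mul_sum _ _ ε, Finset.sum_add_distrib,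
          Finset.sum_const, Finset.card_range,
          Finset.sum_range_sub fun i => rightDeriv f (node a l i), hlast, node_zero, nsmul_eq_mul,
          Nat.cast_succ, hl_def, mul_div_cancel₀ _ hk.ne', curvatureSum]

include hZ hζ in
lemma map_onIcc_le (hZ' : GoodVal ζ Z') (hf : ConvexOn ℝ Set.univ f) {a b : ℝ} (hab : a ≤ b) :
    Z (onIcc f a b) ≤ Z' (onIcc f a b) := by
  rcases hab.eq_or_lt with rfl | hab
  · rw [hZ.map_onIcc_self hf, hZ'.map_onIcc_self hf]
  set R := (b - a) + (rightDeriv f b - rightDeriv f a) with hR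
  have hRpos : 0 < R := by linarith [monotone_rightDeriv hf hab.le]
  refine le_of_forall_pos_le_add fun ε hε => sub_le_iff_le_add.mp ?_
  refine hZ'.le_map_onIcc_of_le_curvatureSum hζ hf hab ?_
  filter_upwards [hZ.eventually_map_onIcc_le_curvatureSum_add hζ hf hab (div_pos hε hRpos)]
    with k hk
  rw [← hR, div_mul_cancel₀ _ hRpos.ne'] at hk
  exact sub_le_iff_le_add.mpr hk

include hZ hζ in
theorem eq_of_isLC (hZ' : GoodVal ζ Z') {u : ℝ → EReal} (hu : IsLC u) : Z u = Z' u := by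
  obtain ⟨f, a, b, hab, hf, rfl⟩ := hu.exists_eq_onIcc
  exact le_antisymm (hZ.map_onIcc_le hζ hZ' hf hab) (hZ'.map_onIcc_le hζ hZ hf hab)

end GoodVal

/-! ### Difference quotients of monotone functions -/

lemma integrable_and_integral_le_of_tendsto {α : Type*} [MeasurableSpace α] {μ : Measure α}
    {F : ℕ → α → ℝ} {f : α → ℝ} {C : ℝ} (hF : ∀ n, Integrable (F n) μ) (hF0 : ∀ n x, 0 ≤ F n x)
    (hlim : ∀ᵐ x ∂μ, Tendsto (fun n => F n x) atTop (𝓝 (f x)))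
    (hC : ∀ᶠ n in atTop, ∫ x, F n x ∂μ ≤ C) :
    Integrable f μ ∧ ∫ x, f x ∂μ ≤ C := by
  have hmeas : AEStronglyMeasurable f μ :=
    aestronglyMeasurable_of_tendsto_ae _ (fun n => (hF n).aestronglyMeasurable) hlim
  have hf0 : 0 ≤ᵐ[μ] f := by
    filter_upwards [hlim] with x hx using ge_of_tendsto' hx fun n => hF0 n x
  have hfatou : ∫⁻ x, ENNReal.ofReal (f x) ∂μ ≤ ENNReal.ofReal C := by
    calc ∫⁻ x, ENNReal.ofReal (f x) ∂μ
        = ∫⁻ x, liminf (fun n => ENNReal.ofReal (F n x)) atTop ∂μ := by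
          refine lintegral_congr_ae ?_
          filter_upwards [hlim] with x hx
          exact ((ENNReal.continuous_ofReal.tendsto _).comp hx).liminf_eq.symm
      _ ≤ liminf (fun n => ∫⁻ x, ENNReal.ofReal (F n x) ∂μ) atTop :=
          lintegral_liminf_le' fun n => (hF n).aemeasurable.ennreal_ofReal
      _ ≤ ENNReal.ofReal C := by
          refine liminf_le_of_frequently_le (hC.mono fun n hn => ?_).frequently
          rw [← ofReal_integral_eq_lintegral_ofReal (hF n) (Eventually.of_forall (hF0 n))]
          exact ENNReal.ofReal_le_ofReal hn
  have hint : Integrable f μ :=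
    ⟨hmeas, (hasFiniteIntegral_iff_ofReal hf0).mpr (hfatou.trans_lt ENNReal.ofReal_lt_top)⟩
  have hC0 : 0 ≤ C := hC.exists.elim fun n hn => (integral_nonneg (hF0 n)).trans hn
  rw [← ofReal_integral_eq_lintegral_ofReal hint hf0, ENNReal.ofReal_le_ofReal_iff hC0] at hfatou
  exact ⟨hint, hfatou⟩

/-- The forward difference quotient of `r` with step `h`. -/
def diffQuot (r : ℝ → ℝ) (h x : ℝ) : ℝ := (r (x + h) - r x) / h

lemma diffQuot_half_average (r : ℝ → ℝ) (h x : ℝ) :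
    (diffQuot r (h / 2) x + diffQuot r (h / 2) (x + h / 2)) / 2 = diffQuot r h x := by
  simp only [diffQuot, add_assoc, add_halves]
  field_simp
  ring

lemma tendsto_half_pow_nhdsGT : Tendsto (fun n : ℕ => ((1 : ℝ) / 2) ^ n) atTop (𝓝[>] 0) :=
  tendsto_pow_atTop_nhdsWithin_zero_of_lt_one one_half_pos one_half_lt_one

section Monotone

variable {r : ℝ → ℝ} (hr : Monotone r)
include hr

lemma diffQuot_nonneg {h : ℝ} (hh : 0 < h) (x : ℝ) : 0 ≤ diffQuot r h x :=
  div_nonneg (sub_nonneg.mpr (hr (by linarith))) hh.le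

lemma measurable_diffQuot (h : ℝ) : Measurable (diffQuot r h) :=
  ((hr.measurable.comp (measurable_add_const h)).sub hr.measurable).div_const h

lemma ae_tendsto_diffQuot :
    ∀ᵐ x, Tendsto (fun n : ℕ => diffQuot r ((1 / 2) ^ n) x) atTop (𝓝 (deriv r x)) := by
  filter_upwards [hr.ae_differentiableAt] with x hx
  refine (hx.hasDerivAt.tendsto_slope_zero_right.comp tendsto_half_pow_nhdsGT).congr fun n => ?_
  rw [Function.comp_apply, smul_eq_mul, inv_mul_eq_div, diffQuot]

end Monotone

/-- `r` is a monotone function with value `α` to the left of `a` and value `β` from `b` on. The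
right derivatives of slope extensions are of this kind, with `α = -M` and `β = M`. -/
structure IsTransition (r : ℝ → ℝ) (a b α β : ℝ) : Prop where
  monotone : Monotone r
  left : ∀ x < a, r x = α
  right : ∀ x, b ≤ x → r x = β

namespace IsTransition

variable {r : ℝ → ℝ} {a b α β h : ℝ} (hr : IsTransition r a b α β)
include hr

lemma le (x : ℝ) : r x ≤ β :=
  (hr.monotone (le_max_left x b)).trans_eq (hr.right _ (le_max_right x b))

lemma ge (x : ℝ) : α ≤ r x := by
  rw [← hr.left (min x (a - 1)) ((min_le_right _ _).trans_lt (sub_one_lt a))]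
  exact hr.monotone (min_le_left _ _)

lemma diffQuot_le (hh : 0 < h) (x : ℝ) : diffQuot r h x ≤ (β - α) / h := by
  rw [diffQuot]
  gcongr
  exacts [hr.le _, hr.ge _]

lemma diffQuot_eq_zero (hh : 0 ≤ h) {x : ℝ} (hx : x ∉ Set.Icc (a - h) b) :
    diffQuot r h x = 0 := by
  rw [Set.mem_Icc, not_and_or, not_le, not_le] at hx
  rcases hx with hx | hx
  · rw [diffQuot, hr.left x (by linarith), hr.left (x + h) (by linarith), sub_self, zero_div]
  · rw [diffQuot, hr.right x hx.le, hr.right (x + h) (by linarith), sub_self, zero_div]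

lemma deriv_eq_zero {x : ℝ} (hx : x ∉ Set.Icc a b) : deriv r x = 0 := by
  rw [Set.mem_Icc, not_and_or, not_le, not_le] at hx
  rcases hx with hx | hx
  · rw [Filter.EventuallyEq.deriv_eq (f := fun _ => α) (mem_of_superset (Iio_mem_nhds hx) hr.left),
      deriv_const]
  · rw [Filter.EventuallyEq.deriv_eq (f := fun _ => β)
      (mem_of_superset (Ioi_mem_nhds hx) fun y hy => hr.right y (le_of_lt hy)), deriv_const]

section Continuous

variable {ψ : ℝ → ℝ} (hψ : Continuous ψ) (hψ0 : ψ 0 = 0)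
include hψ hψ0

lemma integrable_comp_diffQuot (hh : 0 < h) : Integrable fun x => ψ (diffQuot r h x) := by
  obtain ⟨C, hC⟩ := (isCompact_Icc (a := 0) (b := (β - α) / h)).exists_bound_of_continuousOn
    hψ.continuousOn
  have hIcc : IntegrableOn (fun x => ψ (diffQuot r h x)) (Set.Icc (a - h) b) :=
    Measure.integrableOn_of_bounded measure_Icc_lt_top.ne
      (hψ.measurable.comp (measurable_diffQuot hr.monotone h)).aestronglyMeasurable
      (Eventually.of_forall fun x =>
        hC _ ⟨diffQuot_nonneg hr.monotone hh x, hr.diffQuot_le hh x⟩)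
  refine (integrableOn_iff_integrable_of_support_subset fun x hx => ?_).mp hIcc
  by_contra hmem
  exact hx (by simp only [hr.diffQuot_eq_zero hh.le hmem, hψ0])

lemma integral_comp_diffQuot_half_le
    (hmid : ∀ s t, 0 ≤ s → 0 ≤ t → (ψ s + ψ t) / 2 ≤ ψ ((s + t) / 2)) (hh : 0 < h) :
    ∫ x, ψ (diffQuot r (h / 2) x) ≤ ∫ x, ψ (diffQuot r h x) := by
  have hint := hr.integrable_comp_diffQuot hψ hψ0 (half_pos hh)
  have hint' := hint.comp_add_right (h / 2)
  calc ∫ x, ψ (diffQuot r (h / 2) x)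
      = ∫ x, (ψ (diffQuot r (h / 2) x) + ψ (diffQuot r (h / 2) (x + h / 2))) / 2 := by
        rw [integral_div, integral_add hint hint',
          integral_add_right_eq_self fun x => ψ (diffQuot r (h / 2) x), add_self_div_two]
    _ ≤ ∫ x, ψ (diffQuot r h x) := by
        refine integral_mono ((hint.add hint').div_const 2)
          (hr.integrable_comp_diffQuot hψ hψ0 hh) fun x => ?_
        rw [← diffQuot_half_average r h x]
        exact hmid _ _ (diffQuot_nonneg hr.monotone (half_pos hh) _)
          (diffQuot_nonneg hr.monotone (half_pos hh) _)

lemma antitone_integral_comp_diffQuot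
    (hmid : ∀ s t, 0 ≤ s → 0 ≤ t → (ψ s + ψ t) / 2 ≤ ψ ((s + t) / 2)) :
    Antitone fun n : ℕ => ∫ x, ψ (diffQuot r ((1 / 2) ^ n) x) := by
  refine antitone_nat_of_succ_le fun n => ?_
  rw [pow_succ, mul_one_div]
  exact hr.integral_comp_diffQuot_half_le hψ hψ0 hmid (by positivity)

lemma tendsto_integral_comp_diffQuot {C : ℝ} (hC : ∀ t, |ψ t| ≤ C) :
    Tendsto (fun n : ℕ => ∫ x, ψ (diffQuot r ((1 / 2) ^ n) x)) atTop
      (𝓝 (∫ x, ψ (deriv r x))) := by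
  refine tendsto_integral_of_dominated_convergence ((Set.Icc (a - 1) b).indicator fun _ => C)
    (fun n => (hψ.measurable.comp (measurable_diffQuot hr.monotone _)).aestronglyMeasurable)
    ((integrableOn_const measure_Icc_lt_top.ne).integrable_indicator measurableSet_Icc)
    (fun n => Eventually.of_forall fun x => ?_) ?_
  · by_cases hx : x ∈ Set.Icc (a - 1) b
    · rw [Set.indicator_of_mem hx]
      exact hC _
    · have hpow : ((1 : ℝ) / 2) ^ n ≤ 1 := pow_le_one₀ (by norm_num) (by norm_num)
      rw [Set.indicator_of_notMem hx, hr.diffQuot_eq_zero (by positivity)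
        fun h => hx ⟨by linarith [h.1], h.2⟩, hψ0, norm_zero]
  · filter_upwards [ae_tendsto_diffQuot hr.monotone] with x hx
    exact (hψ.tendsto _).comp hx

lemma integral_comp_diffQuot_le_add {φ : ℝ → ℝ} (hφ : Continuous φ) (hφ0 : φ 0 = 0) {δ : ℝ}
    (hle : ∀ t, 0 ≤ t → ψ t ≤ φ t + δ * t) (hh : 0 < h) :
    ∫ x, ψ (diffQuot r h x) ≤ (∫ x, φ (diffQuot r h x)) + δ * ∫ x, diffQuot r h x := by
  have hint := (hr.integrable_comp_diffQuot continuous_id rfl hh).const_mul δ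
  have hint_φ := hr.integrable_comp_diffQuot hφ hφ0 hh
  calc ∫ x, ψ (diffQuot r h x)
      ≤ ∫ x, (φ (diffQuot r h x) + δ * diffQuot r h x) :=
        integral_mono (hr.integrable_comp_diffQuot hψ hψ0 hh) (hint_φ.add hint) fun x =>
          hle _ (diffQuot_nonneg hr.monotone hh x)
    _ = (∫ x, φ (diffQuot r h x)) + δ * ∫ x, diffQuot r h x := by
        rw [← integral_const_mul]
        exact integral_add hint_φ hint

end Continuous

variable {ζ : ℝ → ℝ} (hζ : IsConc ζ)
include hζ

lemma integrable_and_integral_posExt_deriv_le (m : ℕ) :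
    Integrable (fun x => posExt ζ (deriv r x)) ∧
      ∫ x, posExt ζ (deriv r x) ≤ ∫ x, posExt ζ (diffQuot r ((1 / 2) ^ m) x) := by
  have hanti := hr.antitone_integral_comp_diffQuot (continuous_posExt hζ) (posExt_zero hζ)
    fun s t => posExt_add_div_two_le hζ
  refine integrable_and_integral_le_of_tendsto
    (fun n => hr.integrable_comp_diffQuot (continuous_posExt hζ) (posExt_zero hζ)
      (h := (1 / 2) ^ n) (by positivity))
    (fun n x => posExt_nonneg hζ _) ?_ (eventually_atTop.mpr ⟨m, fun n hn => hanti hn⟩)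
  filter_upwards [ae_tendsto_diffQuot hr.monotone] with x hx
  exact ((continuous_posExt hζ).tendsto _).comp hx

/-- The truncated integrands `ζ (min · K)` are bounded, so their integrals converge; the sublinear
growth of `ζ` makes the error of the truncation small compared with the total variation of `r`. -/
lemma exists_integral_posExt_diffQuot_lt {ε : ℝ} (hε : 0 < ε) :
    ∃ n : ℕ, ∫ x, posExt ζ (diffQuot r ((1 / 2) ^ n) x) < (∫ x, posExt ζ (deriv r x)) + ε := by
  set V := ∫ x, diffQuot r ((1 / 2) ^ 0) x
  have hV : 0 ≤ V := integral_nonneg fun x => diffQuot_nonneg hr.monotone (by positivity) x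
  have hδ : 0 < ε / (2 * (V + 1)) := by positivity
  obtain ⟨K, hK0, hK⟩ := exists_posExt_le_posExt_min_add hζ hδ
  have htrunc : Continuous fun t => posExt ζ (min t K) := (continuous_posExt hζ).comp (by fun_prop)
  have htrunc0 : posExt ζ (min 0 K) = 0 := by rw [min_eq_left hK0, posExt_zero hζ]
  have hlim := hr.tendsto_integral_comp_diffQuot htrunc htrunc0 (C := posExt ζ K) fun t => by
    rw [abs_of_nonneg (posExt_nonneg hζ _)]
    exact monotone_posExt hζ (min_le_right t K)
  have hle : ∫ x, posExt ζ (min (deriv r x) K) ≤ ∫ x, posExt ζ (deriv r x) :=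
    integral_mono_of_nonneg (Eventually.of_forall fun x => posExt_nonneg hζ _)
      (hr.integrable_and_integral_posExt_deriv_le hζ 0).1
      (Eventually.of_forall fun x => monotone_posExt hζ (min_le_left _ _))
  obtain ⟨n, hn⟩ := (hlim.eventually
    (gt_mem_nhds (hle.trans_lt (lt_add_of_pos_right _ (half_pos hε))))).exists
  have hvar : ∫ x, diffQuot r ((1 / 2) ^ n) x ≤ V :=
    hr.antitone_integral_comp_diffQuot continuous_id rfl (fun s t _ _ => le_rfl) (Nat.zero_le n)
  have hδV : ε / (2 * (V + 1)) * V < ε / 2 := by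
    rw [div_mul_eq_mul_div, div_lt_div_iff₀ (by positivity) two_pos]
    nlinarith
  have hbound := hr.integral_comp_diffQuot_le_add (continuous_posExt hζ) (posExt_zero hζ) htrunc
    htrunc0 hK (h := (1 / 2) ^ n) (by positivity)
  exact ⟨n, by linarith [mul_le_mul_of_nonneg_left hvar hδ.le]⟩

end IsTransition

/-! ### The curvature integral -/

/-- The density `ζ(u'')` on the interior of the domain of `u`, where `u''` is the absolutely
continuous part of the distributional second derivative, realized as the pointwise derivative of
the right derivative; it is zero elsewhere. -/
def curvatureDensity (ζ : ℝ → ℝ) (u : ℝ → EReal) : ℝ → ℝ :=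
  (interior (edom u)).indicator fun x => posExt ζ (deriv (rightDeriv (toRealFn u)) x)

/-- The functional `u ↦ ∫ ζ(u'')`, the integral being over the domain of `u`. -/
def curvatureIntegral (ζ : ℝ → ℝ) (u : ℝ → EReal) : ℝ := ∫ x, curvatureDensity ζ u x

lemma curvatureIntegral_nonneg {ζ : ℝ → ℝ} (hζ : IsConc ζ) (u : ℝ → EReal) :
    0 ≤ curvatureIntegral ζ u :=
  integral_nonneg <| Set.indicator_nonneg fun _ _ => posExt_nonneg hζ _

lemma deriv_rightDeriv_congr {f g : ℝ → ℝ} {x : ℝ} (h : f =ᶠ[𝓝 x] g) :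
    deriv (rightDeriv f) x = deriv (rightDeriv g) x := by
  refine Filter.EventuallyEq.deriv_eq ?_
  filter_upwards [h.eventually_nhds] with y hy
  exact Filter.EventuallyEq.derivWithin_eq_of_nhds hy

lemma curvatureDensity_onIcc (ζ f : ℝ → ℝ) (a b : ℝ) :
    curvatureDensity ζ (onIcc f a b) =
      (Set.Ioo a b).indicator fun x => posExt ζ (deriv (rightDeriv f) x) := by
  rw [curvatureDensity, edom_onIcc, interior_Icc]
  refine Set.indicator_congr fun x hx => ?_
  have hcongr : toRealFn (onIcc f a b) =ᶠ[𝓝 x] f := by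
    filter_upwards [Ioo_mem_nhds hx.1 hx.2] with y hy
    rw [toRealFn, toReal_onIcc (Set.Ioo_subset_Icc_self hy)]
  rw [deriv_rightDeriv_congr hcongr]

lemma curvatureIntegral_onIcc (ζ f : ℝ → ℝ) (a b : ℝ) :
    curvatureIntegral ζ (onIcc f a b) =
      ∫ x in Set.Ioo a b, posExt ζ (deriv (rightDeriv f) x) := by
  rw [curvatureIntegral, curvatureDensity_onIcc, integral_indicator measurableSet_Ioo]

lemma IsSlopeExtension.isTransition_rightDeriv {f : ℝ → ℝ} {a b M : ℝ}
    (hf : IsSlopeExtension f a b M) : IsTransition (rightDeriv f) a b (-M) M where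
  monotone := monotone_rightDeriv hf.convexOn
  left x hx := by
    have haff : HasDerivAt (fun y => f a + M * (a - y)) (-M) x := by
      simpa only [mul_neg, mul_one] using
        (((hasDerivAt_id' x).const_sub a).const_mul M).const_add (f a)
    exact rightDeriv_eq_of_hasDerivAt <| haff.congr_of_eventuallyEq <|
      mem_of_superset (Iio_mem_nhds hx) fun y hy => hf.left y (le_of_lt hy)
  right x hx := by
    have haff : HasDerivAt (fun y => f b + M * (y - b)) M x := by
      simpa only [mul_one] using (((hasDerivAt_id' x).sub_const b).const_mul M).const_add (f b)
    exact (haff.hasDerivWithinAt.congr (fun y hy => hf.right y (hx.trans (le_of_lt hy)))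
      (hf.right x hx)).derivWithin (uniqueDiffWithinAt_Ioi x)

lemma IsSlopeExtension.curvatureIntegral_onIcc_eq_integral {ζ : ℝ → ℝ} (hζ : IsConc ζ) {f : ℝ → ℝ}
    {a b M : ℝ} (hf : IsSlopeExtension f a b M) :
    curvatureIntegral ζ (onIcc f a b) = ∫ x, posExt ζ (deriv (rightDeriv f) x) := by
  rw [curvatureIntegral_onIcc, ← integral_Icc_eq_integral_Ioo]
  refine setIntegral_eq_integral_of_forall_compl_eq_zero fun x hx => ?_
  rw [hf.isTransition_rightDeriv.deriv_eq_zero hx, posExt_zero hζ]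

/-! ### Upper semicontinuity of the curvature integral -/

section Tendsto

variable {F : ℕ → ℝ → ℝ} {f : ℝ → ℝ} (hF : ∀ k, ConvexOn ℝ Set.univ (F k))
  (hf : ConvexOn ℝ Set.univ f) (hlim : ∀ x, Tendsto (fun k => F k x) atTop (𝓝 (f x)))
include hF hf hlim

lemma eventually_lt_rightDeriv {x y c : ℝ} (hyx : y < x) (hc : c < rightDeriv f y) :
    ∀ᶠ k in atTop, c < rightDeriv (F k) x := by
  have hslope : c * (x - y) < f x - f y := by nlinarith [tangent_le hf y x]
  filter_upwards [((hlim x).sub (hlim y)).eventually (lt_mem_nhds hslope)] with k hk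
  by_contra! hle
  nlinarith [tangent_le (hF k) x y]

lemma eventually_rightDeriv_lt {x y c : ℝ} (hxy : x < y) (hc : rightDeriv f y < c) :
    ∀ᶠ k in atTop, rightDeriv (F k) x < c := by
  have hslope : f y - f x < c * (y - x) := by nlinarith [tangent_le hf y x]
  filter_upwards [((hlim y).sub (hlim x)).eventually (gt_mem_nhds hslope)] with k hk
  by_contra! hle
  nlinarith [tangent_le (hF k) x y]

lemma tendsto_rightDeriv {x : ℝ} (hx : ContinuousAt (rightDeriv f) x) :
    Tendsto (fun k => rightDeriv (F k) x) atTop (𝓝 (rightDeriv f x)) := by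
  refine tendsto_order.mpr ⟨fun c hc => ?_, fun c hc => ?_⟩
  · obtain ⟨y, hcy, hyx⟩ := (((hx.eventually (lt_mem_nhds hc)).filter_mono nhdsWithin_le_nhds).and
      (self_mem_nhdsWithin (s := Set.Iio x))).exists
    exact eventually_lt_rightDeriv hF hf hlim hyx hcy
  · obtain ⟨y, hcy, hxy⟩ := (((hx.eventually (gt_mem_nhds hc)).filter_mono nhdsWithin_le_nhds).and
      (self_mem_nhdsWithin (s := Set.Ioi x))).exists
    exact eventually_rightDeriv_lt hF hf hlim hxy hcy

lemma ae_tendsto_diffQuot_rightDeriv (h : ℝ) :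
    ∀ᵐ x, Tendsto (fun k => diffQuot (rightDeriv (F k)) h x) atTop
      (𝓝 (diffQuot (rightDeriv f) h x)) := by
  have hcont : ∀ᵐ x, ContinuousAt (rightDeriv f) x := by
    filter_upwards [(monotone_rightDeriv hf).countable_not_continuousAt.ae_notMem volume] with x hx
    exact not_not.mp hx
  have hcont' : ∀ᵐ x, ContinuousAt (rightDeriv f) (x + h) :=
    (measurePreserving_add_right volume h).quasiMeasurePreserving.ae hcont
  filter_upwards [hcont, hcont'] with x hx hxh
  exact ((tendsto_rightDeriv hF hf hlim hxh).sub (tendsto_rightDeriv hF hf hlim hx)).div_const h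

end Tendsto

namespace TauConv

variable {F : ℕ → ℝ → ℝ} {f : ℝ → ℝ} {A B : ℕ → ℝ} {a b M : ℝ}
  (hc : TauConv (fun k => onIcc (F k) (A k) (B k)) (onIcc f a b))
include hc

lemma exists_tendsto_apply {y : ℝ} (hy : y ∈ Set.Icc a b) :
    ∃ z : ℕ → ℝ, Tendsto z atTop (𝓝 y) ∧ (∀ᶠ k in atTop, z k ∈ Set.Icc (A k) (B k)) ∧
      Tendsto (fun k => F k (z k)) atTop (𝓝 (f y)) := by
  obtain ⟨z, hz, hlim⟩ := hc.2.2.2.1 y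
  rw [onIcc_of_mem hy] at hlim
  have hmem : ∀ᶠ k in atTop, z k ∈ Set.Icc (A k) (B k) := by
    filter_upwards [hlim.eventually (gt_mem_nhds (EReal.coe_lt_top (f y)))] with k hk
    by_contra hno
    simp only [onIcc_of_notMem hno, lt_self_iff_false] at hk
  refine ⟨z, hz, hmem,
    ((EReal.tendsto_toReal (EReal.coe_ne_top _) (EReal.coe_ne_bot _)).comp hlim).congr' ?_⟩
  filter_upwards [hmem] with k hk using toReal_onIcc hk

variable (hF : ∀ k, IsSlopeExtension (F k) (A k) (B k) M)
include hF

lemma tendsto_apply_of_mem {y : ℝ} (hy : y ∈ Set.Icc a b) :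
    Tendsto (fun k => F k y) atTop (𝓝 (f y)) := by
  obtain ⟨z, hz, -, hFz⟩ := hc.exists_tendsto_apply hy
  have hdiff : Tendsto (fun k => F k y - F k (z k)) atTop (𝓝 0) := by
    refine squeeze_zero_norm (fun k => (hF k).lipschitz _ _) ?_
    simpa only [sub_self, abs_zero, mul_zero] using ((hz.const_sub y).abs).const_mul M
  simpa only [sub_add_cancel, zero_add] using hdiff.add hFz

section Endpoints

variable (hab : a ≤ b)
include hab

lemma eventually_notMem_Icc {z : ℝ} (hz : z ∉ Set.Icc a b) :
    ∀ᶠ k in atTop, z ∉ Set.Icc (A k) (B k) := by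
  by_contra hfreq
  have hbdd : ∀ᶠ k in atTop, F k a < f a + 1 :=
    (hc.tendsto_apply_of_mem hF (Set.left_mem_Icc.mpr hab)).eventually (gt_mem_nhds (by linarith))
  have hle : ∃ᶠ k in atTop,
      onIcc (F k) (A k) (B k) z ≤ ((f a + 1 + M * |z - a| : ℝ) : EReal) := by
    refine ((not_eventually.mp hfreq).and_eventually hbdd).mono fun k ⟨hk, hFa⟩ => ?_
    rw [onIcc_of_mem (not_not.mp hk), EReal.coe_le_coe_iff]
    linarith [hFa, (abs_le.mp ((hF k).lipschitz z a)).2]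
  have htop := (hc.2.2.1 z (fun _ => z) tendsto_const_nhds).trans (liminf_le_of_frequently_le hle)
  rw [onIcc_of_notMem hz, top_le_iff] at htop
  exact EReal.coe_ne_top _ htop

lemma tendsto_left : Tendsto A atTop (𝓝 a) := by
  obtain ⟨z, hz, hmem, -⟩ := hc.exists_tendsto_apply (Set.left_mem_Icc.mpr hab)
  refine tendsto_order.mpr ⟨fun c hca => ?_, fun c hac => ?_⟩
  · filter_upwards [hz.eventually (lt_mem_nhds hca), hmem,
      hc.eventually_notMem_Icc hF hab fun h => h.1.not_gt hca] with k hzc hzk hck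
    by_contra! hAc
    exact hck ⟨hAc, hzc.le.trans hzk.2⟩
  · filter_upwards [hz.eventually (gt_mem_nhds hac), hmem] with k hzc hzk
    exact hzk.1.trans_lt hzc

lemma tendsto_right : Tendsto B atTop (𝓝 b) := by
  obtain ⟨z, hz, hmem, -⟩ := hc.exists_tendsto_apply (Set.right_mem_Icc.mpr hab)
  refine tendsto_order.mpr ⟨fun c hcb => ?_, fun c hbc => ?_⟩
  · filter_upwards [hz.eventually (lt_mem_nhds hcb), hmem] with k hzc hzk
    exact hzc.trans_le hzk.2
  · filter_upwards [hz.eventually (gt_mem_nhds hbc), hmem,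
      hc.eventually_notMem_Icc hF hab fun h => h.2.not_gt hbc] with k hzc hzk hck
    by_contra! hcB
    exact hck ⟨hzk.1.trans hzc.le, hcB⟩

end Endpoints

variable (hf : IsSlopeExtension f a b M)
include hf

lemma tendsto_apply (x : ℝ) : Tendsto (fun k => F k x) atTop (𝓝 (f x)) := by
  have hclamp : Tendsto (fun k => clamp (A k) (B k) x) atTop (𝓝 (clamp a b x)) :=
    (hc.tendsto_left hF hf.le).max ((hc.tendsto_right hF hf.le).min tendsto_const_nhds)
  have hdiff :
      Tendsto (fun k => F k (clamp (A k) (B k) x) - F k (clamp a b x)) atTop (𝓝 0) := by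
    refine squeeze_zero_norm (fun k => (hF k).lipschitz _ _) ?_
    simpa only [sub_self, abs_zero, mul_zero] using
      ((hclamp.sub_const (clamp a b x)).abs).const_mul M
  have hval : Tendsto (fun k => F k (clamp (A k) (B k) x)) atTop (𝓝 (f (clamp a b x))) := by
    simpa only [sub_add_cancel, zero_add] using
      hdiff.add (hc.tendsto_apply_of_mem hF (clamp_mem_Icc hf.le x))
  rw [hf.eq_clamp x, funext fun k => (hF k).eq_clamp x]
  exact hval.add (((hclamp.const_sub x).abs).const_mul M)

lemma tendsto_integral_posExt_diffQuot {ζ : ℝ → ℝ} (hζ : IsConc ζ) {h : ℝ} (hh : 0 < h) :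
    Tendsto (fun k => ∫ x, posExt ζ (diffQuot (rightDeriv (F k)) h x)) atTop
      (𝓝 (∫ x, posExt ζ (diffQuot (rightDeriv f) h x))) := by
  refine tendsto_integral_filter_of_dominated_convergence
    ((Set.Icc (a - 1 - h) (b + 1)).indicator fun _ => posExt ζ ((M - -M) / h))
    (Eventually.of_forall fun k => ((continuous_posExt hζ).measurable.comp
      (measurable_diffQuot (hF k).isTransition_rightDeriv.monotone h)).aestronglyMeasurable)
    ?_ ((integrableOn_const measure_Icc_lt_top.ne).integrable_indicator measurableSet_Icc) ?_
  · filter_upwards [(hc.tendsto_left hF hf.le).eventually (lt_mem_nhds (sub_one_lt a)),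
      (hc.tendsto_right hF hf.le).eventually (gt_mem_nhds (lt_add_one b))] with k hA hB
    refine Eventually.of_forall fun x => ?_
    have hr := (hF k).isTransition_rightDeriv
    rw [Real.norm_of_nonneg (posExt_nonneg hζ _)]
    by_cases hx : x ∈ Set.Icc (a - 1 - h) (b + 1)
    · rw [Set.indicator_of_mem hx]
      exact monotone_posExt hζ (hr.diffQuot_le hh x)
    · rw [Set.indicator_of_notMem hx, hr.diffQuot_eq_zero hh.le, posExt_zero hζ]
      exact fun hmem => hx ⟨by linarith [hmem.1], hmem.2.trans hB.le⟩
  · filter_upwards [ae_tendsto_diffQuot_rightDeriv (fun k => (hF k).convexOn) hf.convexOn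
      (hc.tendsto_apply hF hf) h] with x hx
    exact ((continuous_posExt hζ).tendsto _).comp hx

end TauConv

lemma LipBound.mono {V : Type*} [NormedAddCommGroup V] {u : V → EReal} {L M : ℝ}
    (h : LipBound u L) (hLM : L ≤ M) : LipBound u M :=
  fun x hx y hy => (h x hx y hy).trans (mul_le_mul_of_nonneg_right hLM (norm_nonneg _))

lemma TauConv.exists_isSlopeExtension {uk : ℕ → ℝ → EReal} {u : ℝ → EReal} (hc : TauConv uk u) :
    ∃ (F : ℕ → ℝ → ℝ) (f : ℝ → ℝ) (A B : ℕ → ℝ) (a b M : ℝ),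
      (∀ k, IsSlopeExtension (F k) (A k) (B k) M) ∧ IsSlopeExtension f a b M ∧
        (uk = fun k => onIcc (F k) (A k) (B k)) ∧ u = onIcc f a b := by
  obtain ⟨huk, hu, -, -, L, hL, hLk⟩ := hc
  obtain ⟨L', -, hL'⟩ := hu.2.2.2.2.2
  have hM : 0 ≤ max L L' := hL.le.trans (le_max_left L L')
  obtain ⟨f, a, b, hf, hfu⟩ := hu.exists_isSlopeExtension hM (hL'.mono (le_max_right L L'))
  choose F A B hF hFu using fun k =>
    (huk k).exists_isSlopeExtension hM ((hLk k).mono (le_max_left L L'))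
  exact ⟨F, f, A, B, a, b, _, hF, hf, funext hFu, hfu⟩

lemma tauUSC_curvatureIntegral {ζ : ℝ → ℝ} (hζ : IsConc ζ) : TauUSC (curvatureIntegral ζ) := by
  intro uk u hc
  obtain ⟨F, f, A, B, a, b, M, hF, hf, rfl, rfl⟩ := hc.exists_isSlopeExtension
  refine le_of_forall_pos_le_add fun ε hε => ?_
  obtain ⟨n, hn⟩ := hf.isTransition_rightDeriv.exists_integral_posExt_diffQuot_lt hζ hε
  have hlim := hc.tendsto_integral_posExt_diffQuot hF hf hζ (h := (1 / 2) ^ n) (by positivity)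
  refine limsup_le_of_le (isCoboundedUnder_le_of_le _ fun k => curvatureIntegral_nonneg hζ _) ?_
  filter_upwards [hlim.eventually (gt_mem_nhds hn)] with k hk
  rw [hf.curvatureIntegral_onIcc_eq_integral hζ, (hF k).curvatureIntegral_onIcc_eq_integral hζ]
  exact ((hF k).isTransition_rightDeriv.integrable_and_integral_posExt_deriv_le hζ n).2.trans hk.le

/-! ### The valuation property and the invariances -/

lemma integrable_curvatureDensity_onIcc {ζ f : ℝ → ℝ} (hζ : IsConc ζ)
    (hf : ConvexOn ℝ Set.univ f) (a b : ℝ) : Integrable (curvatureDensity ζ (onIcc f a b)) := by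
  rw [curvatureDensity_onIcc, integrable_indicator_iff measurableSet_Ioo]
  rcases le_total b a with hab | hab
  · rw [Set.Ioo_eq_empty_of_le hab]
    exact integrableOn_empty
  obtain ⟨C, hC⟩ := exists_posExt_le_add hζ
  have hderiv : IntegrableOn (deriv (rightDeriv f)) (Set.Ioo a b) :=
    (intervalIntegrable_iff_integrableOn_Ioo_of_le hab).mp
      ((monotone_rightDeriv hf).monotoneOn _).intervalIntegrable_deriv
  have hbound : IntegrableOn (fun x => C + deriv (rightDeriv f) x) (Set.Ioo a b) :=
    (integrableOn_const measure_Ioo_lt_top.ne).add hderiv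
  refine hbound.mono'
    ((continuous_posExt hζ).measurable.comp (measurable_deriv _)).aestronglyMeasurable
    (Eventually.of_forall fun x => ?_)
  rw [Real.norm_of_nonneg (posExt_nonneg hζ _)]
  exact hC _ (monotone_rightDeriv hf).deriv_nonneg

lemma countable_setOf_hasDerivWithinAt_ne {S : Set ℝ} {F G F' G' : ℝ → ℝ} (h : Set.EqOn F G S) :
    {x ∈ S | HasDerivWithinAt F (F' x) (Set.Ioi x) x ∧ HasDerivWithinAt G (G' x) (Set.Ioi x) x ∧
      F' x ≠ G' x}.Countable := by
  refine (countable_setOfPred_isolated_right_within (s := S)).mono ?_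
  rintro x ⟨hxS, hF, hG, hne⟩
  refine ⟨hxS, by_contra fun hacc => hne ?_⟩
  have hunique : UniqueDiffWithinAt ℝ (S ∩ Set.Ioi x) x := by
    rw [uniqueDiffWithinAt_iff_accPt, accPt_principal_iff_nhdsWithin,
      Set.sdiff_singleton_eq_self fun hx => lt_irrefl x hx.2]
    exact ⟨hacc⟩
  exact hunique.eq_deriv _ (hF.mono Set.inter_subset_right)
    ((hG.mono Set.inter_subset_right).congr (fun y hy => h hy.1) (h hxS))

lemma ae_deriv_rightDeriv_eq_of_eq {f g : ℝ → ℝ} (hf : ConvexOn ℝ Set.univ f)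
    (hg : ConvexOn ℝ Set.univ g) :
    ∀ᵐ x, f x = g x → deriv (rightDeriv f) x = deriv (rightDeriv g) x := by
  have hfirst := countable_setOf_hasDerivWithinAt_ne (S := {x | f x = g x})
    (F' := rightDeriv f) (G' := rightDeriv g) fun x hx => hx
  have hsecond := countable_setOf_hasDerivWithinAt_ne
    (S := {x | f x = g x ∧ rightDeriv f x = rightDeriv g x})
    (F' := deriv (rightDeriv f)) (G' := deriv (rightDeriv g)) fun x hx => hx.2
  filter_upwards [hfirst.ae_notMem volume, hsecond.ae_notMem volume,
    (monotone_rightDeriv hf).ae_differentiableAt, (monotone_rightDeriv hg).ae_differentiableAt]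
    with x hx hx' hdf hdg heq
  have heq' : rightDeriv f x = rightDeriv g x := by_contra fun hne =>
    hx ⟨heq, hasDerivWithinAt_rightDeriv hf x, hasDerivWithinAt_rightDeriv hg x, hne⟩
  exact by_contra fun hne => hx' ⟨⟨heq, heq'⟩, hdf.hasDerivAt.hasDerivWithinAt,
    hdg.hasDerivAt.hasDerivWithinAt, hne⟩

lemma ae_curvatureDensity_onIcc_eq_of_eq (ζ : ℝ → ℝ) {f g : ℝ → ℝ} (hf : ConvexOn ℝ Set.univ f)
    (hg : ConvexOn ℝ Set.univ g) (a b c d : ℝ) :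
    ∀ᵐ x, onIcc f a b x = onIcc g c d x →
      curvatureDensity ζ (onIcc f a b) x = curvatureDensity ζ (onIcc g c d) x := by
  simp only [curvatureDensity_onIcc]
  filter_upwards [ae_deriv_rightDeriv_eq_of_eq hf hg, (Ioo_ae_eq_Icc (a := a) (b := b)).mem_iff,
    (Ioo_ae_eq_Icc (a := c) (b := d)).mem_iff] with x hderiv hab hcd heq
  by_cases h1 : x ∈ Set.Icc a b <;> by_cases h2 : x ∈ Set.Icc c d
  · rw [onIcc_of_mem h1, onIcc_of_mem h2, EReal.coe_eq_coe_iff] at heq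
    rw [Set.indicator_of_mem (hab.mpr h1), Set.indicator_of_mem (hcd.mpr h2), hderiv heq]
  · rw [onIcc_of_mem h1, onIcc_of_notMem h2] at heq
    exact absurd heq (EReal.coe_ne_top _)
  · rw [onIcc_of_notMem h1, onIcc_of_mem h2] at heq
    exact absurd heq.symm (EReal.coe_ne_top _)
  · rw [Set.indicator_of_notMem (mt hab.mp h1), Set.indicator_of_notMem (mt hcd.mp h2)]

lemma isVal_curvatureIntegral {ζ : ℝ → ℝ} (hζ : IsConc ζ) : IsVal (curvatureIntegral ζ) := by
  intro u v hu hv hmin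
  obtain ⟨f, a, b, -, hf, rfl⟩ := hu.exists_eq_onIcc
  obtain ⟨g, c, d, -, hg, rfl⟩ := hv.exists_eq_onIcc
  obtain ⟨p, k, l, -, hp, hpeq⟩ := hmin.exists_eq_onIcc
  have hmax : ConvexOn ℝ Set.univ fun x => max (f x) (g x) := hf.sup hg
  have hp_apply (x : ℝ) : onIcc p k l x = min (onIcc f a b x) (onIcc g c d x) :=
    (congrFun hpeq x).symm
  have hmax_apply (x : ℝ) := congrFun (max_onIcc f g a b c d) x
  simp only [hpeq, max_onIcc, curvatureIntegral]
  rw [← integral_add (integrable_curvatureDensity_onIcc hζ hp _ _)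
      (integrable_curvatureDensity_onIcc hζ hmax _ _),
    ← integral_add (integrable_curvatureDensity_onIcc hζ hf _ _)
      (integrable_curvatureDensity_onIcc hζ hg _ _)]
  refine integral_congr_ae ?_
  filter_upwards [ae_curvatureDensity_onIcc_eq_of_eq ζ hp hf k l a b,
    ae_curvatureDensity_onIcc_eq_of_eq ζ hp hg k l c d,
    ae_curvatureDensity_onIcc_eq_of_eq ζ hmax hf (max a c) (min b d) a b,
    ae_curvatureDensity_onIcc_eq_of_eq ζ hmax hg (max a c) (min b d) c d]
    with x hpf hpg hmf hmg
  rw [hp_apply] at hpf hpg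
  rw [← hmax_apply] at hmf hmg
  rcases le_total (onIcc f a b x) (onIcc g c d x) with hle | hle
  · rw [hpf (min_eq_left hle), hmg (max_eq_right hle)]
  · rw [hpg (min_eq_right hle), hmf (max_eq_left hle), add_comm]

lemma transInv_curvatureIntegral (ζ : ℝ → ℝ) : TransInv (curvatureIntegral ζ) := by
  intro u hu y
  obtain ⟨f, a, b, -, -, rfl⟩ := hu.exists_eq_onIcc
  rw [onIcc_sub, curvatureIntegral, curvatureIntegral,
    ← integral_sub_right_eq_self (curvatureDensity ζ (onIcc f a b)) y]
  refine integral_congr_ae (Eventually.of_forall fun x => ?_)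
  simp only [curvatureDensity_onIcc, Set.indicator, Set.mem_Ioo, lt_sub_iff_add_lt,
    sub_lt_iff_lt_add, funext (rightDeriv_comp_sub f y), deriv_comp_sub_const]

lemma dualTransInv_curvatureIntegral (ζ : ℝ → ℝ) : DualTransInv (curvatureIntegral ζ) := by
  intro u hu l c
  obtain ⟨f, a, b, -, hf, rfl⟩ := hu.exists_eq_onIcc
  obtain ⟨m, hm⟩ : ∃ m, ∀ x, l x = m * x :=
    ⟨l 1, fun x => by rw [mul_comm, ← smul_eq_mul, ← map_smul, smul_eq_mul, mul_one]⟩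
  simp only [onIcc_add, curvatureIntegral_onIcc, hm, funext (rightDeriv_add_affine hf m c),
    deriv_add_const]

lemma curvatureIntegral_eq_zero_of_edom_eq_singleton (ζ : ℝ → ℝ) {u : ℝ → EReal} {x : ℝ}
    (hx : edom u = {x}) : curvatureIntegral ζ u = 0 := by
  simp only [curvatureIntegral, curvatureDensity, hx, interior_singleton, Set.indicator_empty,
    integral_zero]

lemma curvatureIntegral_quadratic (ζ : ℝ → ℝ) {a b c : ℝ} (hbc : b ≤ c) :
    curvatureIntegral ζ (onIcc (fun x => a * (x ^ 2 / 2)) b c) = (c - b) * posExt ζ a := by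
  simp only [curvatureIntegral_onIcc, funext (rightDeriv_quadratic a), deriv_const_mul_id',
    setIntegral_const, Measure.real, Real.volume_Ioo, ENNReal.toReal_ofReal (sub_nonneg.mpr hbc),
    smul_eq_mul]

lemma curvatureIntegral_eIndicator_Icc {ζ : ℝ → ℝ} (hζ : IsConc ζ) {a b : ℝ} (hab : a ≤ b) :
    curvatureIntegral ζ (eIndicator (Set.Icc a b)) = 0 := by
  have h := curvatureIntegral_quadratic ζ (a := 0) hab
  rw [posExt_zero hζ, mul_zero] at h
  rw [← onIcc_zero_eq_eIndicator, ← h]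
  simp only [zero_mul]; rfl

lemma goodVal_curvatureIntegral {ζ : ℝ → ℝ} (hζ : IsConc ζ) :
    GoodVal ζ (curvatureIntegral ζ) := by
  refine ⟨tauUSC_curvatureIntegral hζ, isVal_curvatureIntegral hζ, transInv_curvatureIntegral ζ,
    dualTransInv_curvatureIntegral ζ, ?_, ?_, ?_⟩
  · rintro u - ⟨x, hx⟩
    exact curvatureIntegral_eq_zero_of_edom_eq_singleton ζ hx
  · exact fun a b hab => curvatureIntegral_eIndicator_Icc hζ hab
  · intro a m ha hm
    calc curvatureIntegral ζ (onIcc (fun x => a * (x ^ 2 / 2)) (-m) m)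
        = (m - -m) * posExt ζ a := curvatureIntegral_quadratic ζ (by linarith)
      _ = 2 * m * ζ a := by rw [posExt_of_nonneg ha.le]; ring

/-- For every `ζ ∈ Conc` there is a functional `Z` on `LC(ℝ)`, unique on
`LC(ℝ)`, that is τ-upper semicontinuous, a simple, translation and dually epi-translation
invariant valuation vanishing on indicators of closed intervals, and satisfies
`Z(a·q + I_{[-m,m]}) = 2m·ζ(a)` for all `a > 0`, `m > 0`. -/
theorem stmt18 (ζ : ℝ → ℝ) (hζ : IsConc ζ) :
    ∃ Z : (ℝ → EReal) → ℝ, GoodVal ζ Z ∧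
      ∀ Z' : (ℝ → EReal) → ℝ, GoodVal ζ Z' → ∀ u : ℝ → EReal, IsLC u → Z' u = Z u :=
  ⟨curvatureIntegral ζ, goodVal_curvatureIntegral hζ, fun _ hZ' _ hu =>
    hZ'.eq_of_isLC hζ (goodVal_curvatureIntegral hζ) hu⟩

end
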